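/- arXiv:2009.09221 — 4 statements merged into one kernel-verified Lean document; each statement's English description precedes it below -/
import Mathlib

section
/- Any two homeomorphisms with north-south dynamics on Cantor spaces are topologically conjugate: if X and Y are Cantor spaces and T : X → X, S : Y → Y are homeomorphisms with north-south dynamics, then there is a homeomorphism Φ : X → Y with Φ ∘ T = S ∘ Φ. -/
/-!
Let `x⁺`, `x⁻` be the attracting and repelling fixed points of `T`. A compactness argument
(`exists_trapping`) turns pointwise convergence into a clopen set `V` containing `x⁺` but not `x⁻`
with `T V ⊆ V`. The translates `W n = Tⁿ V` then decrease to `{x⁺}` as `n → ∞` and increase to the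
complement of `x⁻` as `n → -∞` (`exists_filtration`). Consequently the complement of the two fixed
points is the disjoint union of the translates `Tⁿ D`, `n ∈ ℤ`, of the clopen fundamental domain
`D = W 0 \ W 1`, which is nonempty because `x⁺` is not isolated.

The fundamental domains of `T` and `S` are Cantor spaces, hence homeomorphic by Brouwer's theorem
(`nonempty_homeomorph_cantor`). A homeomorphism `g` between them extends equivariantly by
`Tⁿ d ↦ Sⁿ (g d)` and `x^± ↦ y^±` (`glue`). The extension is bijective, since the inverse of `g`
extends in the same way, and it carries the sets `W n` onto the corresponding sets for `S`; as
these sets and their complements form neighbourhood bases at the fixed points, it is continuous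
there as well (`glue_continuous`).
-/

open Filter Topology

/-- A homeomorphism `T` of a space has north-south dynamics if it has exactly
two fixed points `x⁺ ≠ x⁻`, every point other than `x⁻` converges to `x⁺`
under forward iteration, and every point other than `x⁺` converges to `x⁻`
under backward iteration. -/
def NorthSouth {X : Type*} [TopologicalSpace X] (T : X ≃ₜ X) : Prop :=
  ∃ xp xm : X, xp ≠ xm ∧ {x : X | T x = x} = {xp, xm} ∧
    (∀ y : X, y ≠ xm → Tendsto (fun n => (⇑T)^[n] y) atTop (nhds xp)) ∧
    (∀ y : X, y ≠ xp → Tendsto (fun n => (⇑T.symm)^[n] y) atTop (nhds xm))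

namespace NSCantor

/-! ### Brouwer's characterization of the Cantor space -/

section Brouwer

variable {X : Type*}

/-- A nonempty clopen set `C` can be cut by a clopen set `P` into two nonempty pieces, each of
which lies on one side of the prescribed clopen set `U`. If `U` itself does not cut `C`, then any
nontrivial cut does the job. -/
lemma exists_split [TopologicalSpace X] [CompactSpace X] [T2Space X] [TotallyDisconnectedSpace X]
    (hX : ∀ x : X, (𝓝[≠] x).NeBot) {U C : Set X} (hU : IsClopen U) (hC : IsClopen C)
    (hne : C.Nonempty) :
    ∃ P : Set X, IsClopen P ∧ (C ∩ P).Nonempty ∧ (C \ P).Nonempty ∧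
      ∀ x ∈ C, ∀ y ∈ C, (x ∈ P ↔ y ∈ P) → (x ∈ U ↔ y ∈ U) := by
  by_cases h : (C ∩ U).Nonempty ∧ (C \ U).Nonempty
  · exact ⟨U, hU, h.1, h.2, fun x _ y _ hxy => hxy⟩
  obtain ⟨x, hx⟩ := hne
  obtain ⟨y, hyx, hyC⟩ : ∃ y, y ≠ x ∧ y ∈ C := by
    have := hX x
    have h1 : C ∩ {x}ᶜ ∈ 𝓝[≠] x :=
      inter_mem (mem_nhdsWithin_of_mem_nhds (hC.isOpen.mem_nhds hx)) self_mem_nhdsWithin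
    obtain ⟨y, hy, hy'⟩ := this.nonempty_of_mem h1
    exact ⟨y, hy', hy⟩
  obtain ⟨P, hP, hxP, hPy⟩ := compact_exists_isClopen_in_isOpen
    (isOpen_compl_singleton (x := y)) (x := x) (by simpa using hyx.symm)
  refine ⟨P, hP, ⟨x, hx, hxP⟩, ⟨y, hyC, fun h => hPy h rfl⟩, fun a ha b hb _ => ?_⟩
  by_contra hab
  apply h
  by_cases haU : a ∈ U
  · exact ⟨⟨a, ha, haU⟩, ⟨b, hb, by tauto⟩⟩
  · exact ⟨⟨b, hb, by tauto⟩, ⟨a, ha, haU⟩⟩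

open Classical in
/-- The `n`-th cell of a point `x` when at stage `n` every cell `C` is cut by the set `P n C`. -/
noncomputable def cell (P : ℕ → Set X → Set X) (x : X) : ℕ → Set X
  | 0 => Set.univ
  | n + 1 => if x ∈ P n (cell P x n) then cell P x n ∩ P n (cell P x n)
      else cell P x n \ P n (cell P x n)

open Classical in
/-- The cell at the end of the finite branch `f 0, …, f (n - 1)`. -/
noncomputable def branch (P : ℕ → Set X → Set X) (f : ℕ → Bool) : ℕ → Set X
  | 0 => Set.univ
  | n + 1 => if f n = true then branch P f n ∩ P n (branch P f n)
      else branch P f n \ P n (branch P f n)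

open Classical in
/-- The infinite branch followed by the point `x`. -/
noncomputable def code (P : ℕ → Set X → Set X) (x : X) (n : ℕ) : Bool :=
  decide (x ∈ P n (cell P x n))

lemma code_eq_true {P : ℕ → Set X → Set X} {x : X} {n : ℕ} :
    code P x n = true ↔ x ∈ P n (cell P x n) := by
  simp [code]

lemma mem_cell (P : ℕ → Set X → Set X) (x : X) (n : ℕ) : x ∈ cell P x n := by
  induction n with
  | zero => trivial
  | succ n ih =>
    rw [cell]
    split_ifs with h
    · exact ⟨ih, h⟩
    · exact ⟨ih, h⟩

lemma cell_eq_branch (P : ℕ → Set X → Set X) (x : X) (n : ℕ) :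
    cell P x n = branch P (code P x) n := by
  induction n with
  | zero => rfl
  | succ n ih =>
    rw [cell, branch, ← ih]
    by_cases h : x ∈ P n (cell P x n)
    · rw [if_pos h, if_pos (code_eq_true.2 h)]
    · rw [if_neg h, if_neg (mt code_eq_true.1 h)]

lemma mem_branch_succ {P : ℕ → Set X → Set X} {f : ℕ → Bool} {x : X} {n : ℕ} :
    x ∈ branch P f (n + 1) ↔ x ∈ branch P f n ∧ (x ∈ P n (branch P f n) ↔ f n = true) := by
  rw [branch]
  split_ifs with h <;> simp [h]

lemma cell_eq_of_mem_branch {P : ℕ → Set X → Set X} {f : ℕ → Bool} {x : X} {n : ℕ}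
    (hx : x ∈ branch P f n) : cell P x n = branch P f n := by
  induction n with
  | zero => rfl
  | succ n ih =>
    rw [mem_branch_succ] at hx
    have := ih hx.1
    rw [cell, branch, this]
    simp only [hx.2]

/-- **Brouwer's theorem**: a nonempty compact metrizable totally disconnected space without
isolated points is homeomorphic to `ℕ → Bool`. At stage `n` each cell is cut in two along the
`n`-th clopen set whenever that set cuts it; hence the coding map separates points, and all finite
branches are nonempty, so that it is onto. -/
theorem nonempty_homeomorph_cantor [TopologicalSpace X] [Nonempty X] [CompactSpace X]
    [TopologicalSpace.MetrizableSpace X] [TotallyDisconnectedSpace X]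
    (hX : ∀ x : X, (𝓝[≠] x).NeBot) : Nonempty (X ≃ₜ (ℕ → Bool)) := by
  have : SecondCountableTopology X := by
    let _ := TopologicalSpace.metrizableSpaceMetric X
    infer_instance
  have : Countable (TopologicalSpace.Clopens X) :=
    TopologicalSpace.Clopens.countable_iff_secondCountable.2 this
  obtain ⟨U, hU⟩ := exists_surjective_nat (TopologicalSpace.Clopens X)
  have key : ∀ (n : ℕ) (C : Set X), ∃ P : Set X, IsClopen C → C.Nonempty →
      (IsClopen P ∧ (C ∩ P).Nonempty ∧ (C \ P).Nonempty ∧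
      ∀ x ∈ C, ∀ y ∈ C, (x ∈ P ↔ y ∈ P) → (x ∈ U n ↔ y ∈ U n)) := by
    intro n C
    by_cases h : IsClopen C ∧ C.Nonempty
    · obtain ⟨P, hP⟩ := exists_split hX (U n).isClopen h.1 h.2
      exact ⟨P, fun _ _ => hP⟩
    · exact ⟨∅, fun h1 h2 => absurd ⟨h1, h2⟩ h⟩
  choose P hP using key
  have hbr : ∀ f n, IsClopen (branch P f n) ∧ (branch P f n).Nonempty := by
    intro f n
    induction n with
    | zero => exact ⟨isClopen_univ, Set.univ_nonempty⟩
    | succ n ih =>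
      obtain ⟨h1, h2, h3, -⟩ := hP n _ ih.1 ih.2
      rw [branch]
      split_ifs
      · exact ⟨ih.1.inter h1, h2⟩
      · exact ⟨ih.1.diff h1, h3⟩
  have hcont : Continuous (code P) := by
    refine continuous_pi fun n => (IsLocallyConstant.iff_exists_open _).2 (fun x => ?_) |>.continuous
    refine ⟨cell P x (n + 1), ?_, mem_cell P x _, fun y hy => ?_⟩
    · rw [cell_eq_branch]
      exact (hbr _ _).1.isOpen
    · rw [cell_eq_branch, mem_branch_succ] at hy
      have h := cell_eq_of_mem_branch hy.1
      rw [Bool.eq_iff_iff, ← hy.2, code_eq_true, h]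
  have hinj : Function.Injective (code P) := by
    intro x y hxy
    by_contra hne
    obtain ⟨V, hV, hxV, hVy⟩ := compact_exists_isClopen_in_isOpen
      (isOpen_compl_singleton (x := y)) (x := x) (by simpa using hne)
    obtain ⟨n, hn⟩ := hU ⟨V, hV⟩
    have hx := mem_cell P x (n + 1)
    have hy := mem_cell P y (n + 1)
    rw [cell_eq_branch, mem_branch_succ] at hx hy
    rw [← hxy] at hy
    have h := (hP n _ (hbr (code P x) n).1 (hbr (code P x) n).2).2.2.2 x hx.1 y hy.1
      (hx.2.trans hy.2.symm)
    rw [hn] at h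
    exact hVy (h.1 hxV) rfl
  have hsurj : Function.Surjective (code P) := by
    intro f
    obtain ⟨x, hx⟩ := IsCompact.nonempty_iInter_of_sequence_nonempty_isCompact_isClosed
      (branch P f) (fun n x hx => (mem_branch_succ.1 hx).1) (fun n => (hbr f n).2)
      (hbr f 0).1.isClosed.isCompact (fun n => (hbr f n).1.isClosed)
    rw [Set.mem_iInter] at hx
    refine ⟨x, funext fun n => ?_⟩
    rw [Bool.eq_iff_iff, ← (mem_branch_succ.1 (hx (n + 1))).2, code_eq_true,
      cell_eq_of_mem_branch (hx n)]
  exact ⟨hcont.homeoOfEquivCompactToT2 (f := Equiv.ofBijective _ ⟨hinj, hsurj⟩)⟩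

lemma nonempty_homeomorph_cantor_of_isClopen [TopologicalSpace X] [CompactSpace X]
    [TopologicalSpace.MetrizableSpace X] [TotallyDisconnectedSpace X]
    (hX : ∀ x : X, (𝓝[≠] x).NeBot) {D : Set X} (hD : IsClopen D) (hne : D.Nonempty) :
    Nonempty (D ≃ₜ (ℕ → Bool)) := by
  have : Nonempty D := hne.to_subtype
  have : CompactSpace D := isCompact_iff_compactSpace.1 hD.isClosed.isCompact
  refine nonempty_homeomorph_cantor fun x => ⟨fun h => ?_⟩
  rw [← isOpen_singleton_iff_punctured_nhds] at h
  have h2 := hD.isOpen.isOpenMap_subtype_val _ h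
  rw [Set.image_singleton, isOpen_singleton_iff_punctured_nhds] at h2
  exact (hX x).ne h2

end Brouwer

/-- Any two nonempty clopen subsets `D`, `E` of Cantor spaces are homeomorphic. The homeomorphism
is given as a pair of globally defined maps, with arbitrary values off `D` and `E`. -/
lemma exists_clopen_equiv {X Y : Type*} [TopologicalSpace X] [TopologicalSpace Y]
    [CompactSpace X] [TopologicalSpace.MetrizableSpace X] [TotallyDisconnectedSpace X]
    [CompactSpace Y] [TopologicalSpace.MetrizableSpace Y] [TotallyDisconnectedSpace Y]
    (hX : ∀ x : X, (𝓝[≠] x).NeBot) (hY : ∀ y : Y, (𝓝[≠] y).NeBot)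
    {D : Set X} {E : Set Y} (hD : IsClopen D) (hE : IsClopen E)
    (hDne : D.Nonempty) (hEne : E.Nonempty) :
    ∃ (g : X → Y) (g' : Y → X), ContinuousOn g D ∧ Set.MapsTo g D E ∧ Set.MapsTo g' E D ∧
      (∀ x ∈ D, g' (g x) = x) ∧ (∀ y ∈ E, g (g' y) = y) := by
  classical
  obtain ⟨a⟩ := nonempty_homeomorph_cantor_of_isClopen hX hD hDne
  obtain ⟨b⟩ := nonempty_homeomorph_cantor_of_isClopen hY hE hEne
  let e : D ≃ₜ E := a.trans b.symm
  obtain ⟨x0, hx0⟩ := hDne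
  obtain ⟨y0, hy0⟩ := hEne
  refine ⟨fun x => if h : x ∈ D then e ⟨x, h⟩ else y0,
    fun y => if h : y ∈ E then e.symm ⟨y, h⟩ else x0, ?_, fun x hx => ?_, fun y hy => ?_, fun x hx => ?_, fun y hy => ?_⟩
  · rw [continuousOn_iff_continuous_domRestrict]
    have : D.domRestrict (fun x => if h : x ∈ D then (e ⟨x, h⟩ : Y) else y0) = fun x => (e x : Y) := by
      ext x
      simp
    rw [this]
    exact continuous_subtype_val.comp e.continuous
  · simp [hx]
  · simp [hy]
  · simp [hx]
  · simp [hy]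

/-! ### Filtrations of a north-south homeomorphism -/

section Dynamics

/-- An equivariant clopen filtration `⋯ ⊇ W 0 ⊇ W 1 ⊇ ⋯` that shrinks to the attracting point
`xp` and exhausts the complement of the repelling point `xm`. -/
structure Filtration {X : Type*} [TopologicalSpace X] (T : X ≃ₜ X) (xp xm : X)
    (W : ℤ → Set X) : Prop where
  clopen : ∀ n, IsClopen (W n)
  shift : ∀ (k n : ℤ) (x : X), (T ^ k) x ∈ W n ↔ x ∈ W (n - k)
  anti : Antitone W
  inter : ∀ x, (∀ n, x ∈ W n) ↔ x = xp
  union : ∀ x, (∀ n, x ∉ W n) ↔ x = xm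
  fix_p : T xp = xp
  fix_m : T xm = xm

lemma zpow_neg_natCast_apply {X : Type*} [TopologicalSpace X] (T : X ≃ₜ X) (n : ℕ) (x : X) :
    (T ^ (-(n : ℤ))) x = (⇑T.symm)^[n] x := by
  induction n generalizing x with
  | zero => simp
  | succ n ih =>
    rw [Function.iterate_succ_apply, ← ih, ← Homeomorph.inv_apply, ← Homeomorph.mul_apply,
      ← zpow_sub_one]
    congr 2
    push_cast
    ring

lemma zpow_natCast_apply {X : Type*} [TopologicalSpace X] (T : X ≃ₜ X) (n : ℕ) (x : X) :
    (T ^ (n : ℤ)) x = (⇑T)^[n] x := by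
  induction n generalizing x with
  | zero => simp
  | succ n ih =>
    rw [Function.iterate_succ_apply, ← ih, ← Homeomorph.mul_apply, ← zpow_add_one]
    push_cast
    rfl

lemma zpow_apply_of_fixed {X : Type*} [TopologicalSpace X] {T : X ≃ₜ X} {x : X} (hx : T x = x)
    (n : ℤ) : (T ^ n) x = x := by
  have hx' : T⁻¹ x = x := by rw [Homeomorph.inv_apply, Homeomorph.symm_apply_eq, hx]
  induction n using Int.induction_on with
  | zero => simp
  | succ n ih => rw [zpow_add_one, Homeomorph.mul_apply, hx, ih]
  | pred n ih => rw [zpow_sub_one, Homeomorph.mul_apply, hx', ih]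

/-- A north-south homeomorphism has a clopen neighbourhood `V` of the attracting point that misses
the repelling point and is mapped into itself. Starting with any clopen neighbourhood `U`, the set
of points whose whole backward orbit stays in `U` is `{xp}`; by compactness finitely many
conditions `T⁻ʲ x ∈ U` already force `T x ∈ U`, and these conditions define `V`. -/
lemma exists_trapping {X : Type*} [TopologicalSpace X] [CompactSpace X] [T2Space X]
    [TotallyDisconnectedSpace X] (T : X ≃ₜ X) {xp xm : X} (hne : xp ≠ xm) (hp : T xp = xp)
    (hbwd : ∀ y : X, y ≠ xp → Tendsto (fun n => (⇑T.symm)^[n] y) atTop (𝓝 xm)) :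
    ∃ V : Set X, IsClopen V ∧ xp ∈ V ∧ xm ∉ V ∧ ∀ x ∈ V, T x ∈ V := by
  obtain ⟨U, hU, hpU, hUm⟩ := compact_exists_isClopen_in_isOpen
    (isOpen_compl_singleton (x := xm)) (x := xp) (by simpa using hne)
  have hmU : xm ∉ U := fun h => hUm h rfl
  have hsymm : T.symm xp = xp := by rw [Homeomorph.symm_apply_eq, hp]
  let A : ℕ → Set X := fun N => ⋂ j ∈ Set.Iic N, (⇑T.symm)^[j] ⁻¹' U
  have memA : ∀ N x, x ∈ A N ↔ ∀ j ≤ N, (⇑T.symm)^[j] x ∈ U := by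
    intro N x
    simp [A]
  have hA : ∀ N, IsClopen (A N) := fun N =>
    (Set.finite_Iic N).isClopen_biInter fun j _ => hU.preimage (T.symm.continuous.iterate j)
  have hanti : Antitone A := by
    intro m n hmn x hx
    rw [memA] at hx ⊢
    exact fun j hj => hx j (hj.trans hmn)
  obtain ⟨N, hN⟩ : ∃ N, A N ⊆ T ⁻¹' U := by
    refine exists_subset_nhds_of_isCompact' hanti.directed_ge
      (fun N => (hA N).isClosed.isCompact) (fun N => (hA N).isClosed) fun x hx => ?_
    have hx' : x = xp := by
      by_contra hxp
      obtain ⟨n, hn⟩ := ((hbwd x hxp).eventually (hU.compl.isOpen.mem_nhds hmU)).exists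
      rw [Set.mem_iInter] at hx
      exact hn ((memA n x).1 (hx n) n le_rfl)
    refine (hU.isOpen.preimage T.continuous).mem_nhds ?_
    rw [hx', Set.mem_preimage, hp]
    exact hpU
  refine ⟨A N, hA N, ?_, fun h => ?_, fun x hx => ?_⟩
  · rw [memA]
    intro j _
    rwa [Function.iterate_fixed hsymm]
  · exact hmU ((memA N xm).1 h 0 (Nat.zero_le _))
  · rw [memA]
    intro j hj
    cases j with
    | zero => exact hN hx
    | succ j =>
      rw [Function.iterate_succ_apply, Homeomorph.symm_apply_apply]
      exact (memA N x).1 hx j (by lia)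

lemma exists_filtration {X : Type*} [TopologicalSpace X] [CompactSpace X] [T2Space X]
    [TotallyDisconnectedSpace X] {T : X ≃ₜ X} (hT : NorthSouth T) :
    ∃ xp xm W, Filtration T xp xm W := by
  obtain ⟨xp, xm, hne, hfix, hfwd, hbwd⟩ := hT
  have hp : T xp = xp := by
    have : xp ∈ {x : X | T x = x} := by simp [hfix]
    exact this
  have hm : T xm = xm := by
    have : xm ∈ {x : X | T x = x} := by simp [hfix]
    exact this
  obtain ⟨V, hV, hpV, hmV, hTV⟩ := exists_trapping T hne hp hbwd
  have hpp : ∀ n : ℤ, (T ^ n) xp = xp := zpow_apply_of_fixed hp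
  have hmm : ∀ n : ℤ, (T ^ n) xm = xm := zpow_apply_of_fixed hm
  refine ⟨xp, xm, fun n => (T ^ (-n)) ⁻¹' V, ?_, ?_, ?_, ?_, ?_, hp, hm⟩
  · exact fun n => hV.preimage (T ^ (-n)).continuous
  · intro k n x
    rw [Set.mem_preimage, ← Homeomorph.mul_apply, ← zpow_add, Set.mem_preimage]
    ring_nf
  · refine antitone_int_of_succ_le fun n x hx => ?_
    have := hTV _ hx
    rw [← Homeomorph.mul_apply, ← zpow_one_add] at this
    simpa using this
  · refine fun x => ⟨fun h => ?_, fun h n => ?_⟩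
    · by_contra hx
      obtain ⟨n, hn⟩ := ((hbwd x hx).eventually (hV.compl.isOpen.mem_nhds hmV)).exists
      rw [← zpow_neg_natCast_apply] at hn
      exact hn (h n)
    · rw [h, Set.mem_preimage, hpp]
      exact hpV
  · refine fun x => ⟨fun h => ?_, fun h n => ?_⟩
    · by_contra hx
      obtain ⟨n, hn⟩ := ((hfwd x hx).eventually (hV.isOpen.mem_nhds hpV)).exists
      rw [← zpow_natCast_apply] at hn
      refine h (-n) ?_
      rw [Set.mem_preimage, neg_neg]
      exact hn
    · rw [h, Set.mem_preimage, hmm]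
      exact hmV

namespace Filtration

variable {X : Type*} [TopologicalSpace X] {T : X ≃ₜ X} {xp xm : X} {W : ℤ → Set X}

lemma p_mem (h : Filtration T xp xm W) (n : ℤ) : xp ∈ W n := (h.inter xp).2 rfl n

lemma m_notMem (h : Filtration T xp xm W) (n : ℤ) : xm ∉ W n := (h.union xm).2 rfl n

lemma p_ne_m (h : Filtration T xp xm W) : xp ≠ xm := fun e => h.m_notMem 0 (e ▸ h.p_mem 0)

/-- Every point that is not fixed has a last set of the filtration containing it. -/
lemma exists_index (h : Filtration T xp xm W) :
    ∃ i : X → ℤ, ∀ x, x ≠ xp → x ≠ xm → ∀ m, x ∈ W m ↔ m ≤ i x := by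
  have : ∀ x, ∃ i : ℤ, x ≠ xp → x ≠ xm → ∀ m, x ∈ W m ↔ m ≤ i := by
    intro x
    by_cases hp : x = xp
    · exact ⟨0, fun h => absurd hp h⟩
    by_cases hm : x = xm
    · exact ⟨0, fun _ h => absurd hm h⟩
    have h1 : ∃ a, x ∉ W a := by
      by_contra! H
      exact hp ((h.inter x).1 H)
    have h2 : ∃ b, x ∈ W b := by
      by_contra! H
      exact hm ((h.union x).1 H)
    obtain ⟨a, ha⟩ := h1
    obtain ⟨i, hi, hi'⟩ := Int.exists_greatest_of_bdd (P := fun m => x ∈ W m)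
      ⟨a, fun z hz => by
        by_contra! H
        exact ha (h.anti H.le hz)⟩ h2
    exact ⟨i, fun _ _ m => ⟨hi' m, fun hm => h.anti hm hi⟩⟩
  choose i hi using this
  exact ⟨i, hi⟩

lemma exists_subset_nhds_p [CompactSpace X] (h : Filtration T xp xm W) {O : Set X}
    (hO : O ∈ 𝓝 xp) : ∃ m, W m ⊆ O := by
  refine exists_subset_nhds_of_isCompact' h.anti.directed_ge
    (fun N => (h.clopen N).isClosed.isCompact) (fun N => (h.clopen N).isClosed) fun x hx => ?_
  rwa [(h.inter x).1 (Set.mem_iInter.1 hx)]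

lemma exists_subset_nhds_m [CompactSpace X] (h : Filtration T xp xm W) {O : Set X}
    (hO : O ∈ 𝓝 xm) : ∃ m, (W m)ᶜ ⊆ O := by
  have hmono : Monotone fun m => (W m)ᶜ := fun a b hab => Set.compl_subset_compl.2 (h.anti hab)
  refine exists_subset_nhds_of_isCompact' hmono.directed_ge
    (fun N => (h.clopen N).compl.isClosed.isCompact) (fun N => (h.clopen N).compl.isClosed)
    fun x hx => ?_
  rwa [(h.union x).1 (Set.mem_iInter.1 hx)]

lemma isClopen_domain (h : Filtration T xp xm W) : IsClopen (W 0 \ W 1) :=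
  (h.clopen 0).diff (h.clopen 1)

/-- Translating a point back by its index brings it into the fundamental domain. -/
lemma zpow_neg_mem_domain (h : Filtration T xp xm W) {i : ℤ} {x : X}
    (hi : ∀ m, x ∈ W m ↔ m ≤ i) : (T ^ (-i)) x ∈ W 0 \ W 1 := by
  constructor
  · rw [h.shift, hi]
    lia
  · rw [h.shift, hi]
    lia

/-- The index of a translate of a point of the fundamental domain is the translation length. -/
lemma zpow_mem_iff_of_mem_domain (h : Filtration T xp xm W) {i : ℤ} {x : X}
    (hx : x ∈ W 0 \ W 1) (m : ℤ) : (T ^ i) x ∈ W m ↔ m ≤ i := by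
  rw [h.shift]
  constructor
  · intro hm
    by_contra! H
    exact hx.2 (h.anti (by lia) hm)
  · intro hm
    exact h.anti (by lia) hx.1

lemma ne_of_index (h : Filtration T xp xm W) {i : ℤ} {x : X}
    (hi : ∀ m, x ∈ W m ↔ m ≤ i) : x ≠ xp ∧ x ≠ xm := by
  constructor
  · rintro rfl
    have := (hi (i + 1)).1 (h.p_mem _)
    lia
  · rintro rfl
    exact h.m_notMem _ ((hi i).2 le_rfl)

lemma domain_nonempty (h : Filtration T xp xm W) (hX : ∀ x : X, (𝓝[≠] x).NeBot) :
    (W 0 \ W 1).Nonempty := by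
  have := hX xp
  have h1 : W 0 ∩ {xp}ᶜ ∈ 𝓝[≠] xp :=
    inter_mem (mem_nhdsWithin_of_mem_nhds ((h.clopen 0).isOpen.mem_nhds (h.p_mem 0)))
      self_mem_nhdsWithin
  obtain ⟨y, hy, hy'⟩ := this.nonempty_of_mem h1
  obtain ⟨i, hi⟩ := h.exists_index
  exact ⟨_, h.zpow_neg_mem_domain (hi y hy' fun e => h.m_notMem 0 (e ▸ hy))⟩

end Filtration

/-! ### Equivariant extension from the fundamental domain -/

variable {X Y : Type*} [TopologicalSpace X] [TopologicalSpace Y]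

open Classical in
/-- The equivariant extension of a map `g` between fundamental domains: a point `x` of index `i x`
is moved to the fundamental domain of `T`, mapped by `g`, and moved away again by `S ^ i x`; the
points `xp`, `xm` go to `yp`, `ym`. -/
noncomputable def glue (T : X ≃ₜ X) (S : Y ≃ₜ Y) (xp xm : X) (yp ym : Y) (i : X → ℤ)
    (g : X → Y) (x : X) : Y :=
  if x = xp then yp else if x = xm then ym else (S ^ i x) (g ((T ^ (-i x)) x))

section Glue

variable {T : X ≃ₜ X} {S : Y ≃ₜ Y} {xp xm : X} {yp ym : Y} {W : ℤ → Set X} {Z : ℤ → Set Y}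
  {i : X → ℤ} {j : Y → ℤ} {g : X → Y} {g' : Y → X}

lemma glue_p : glue T S xp xm yp ym i g xp = yp := by simp [glue]

lemma glue_m (h : Filtration T xp xm W) : glue T S xp xm yp ym i g xm = ym := by
  simp [glue, h.p_ne_m.symm]

lemma glue_of_ne {x : X} (h1 : x ≠ xp) (h2 : x ≠ xm) :
    glue T S xp xm yp ym i g x = (S ^ i x) (g ((T ^ (-i x)) x)) := by
  simp [glue, h1, h2]

/-- The formula for `glue` on a translate of the fundamental domain. -/
lemma glue_zpow (h : Filtration T xp xm W)
    (hi : ∀ x, x ≠ xp → x ≠ xm → ∀ m, x ∈ W m ↔ m ≤ i x) {d : X} (hd : d ∈ W 0 \ W 1) (n : ℤ) :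
    glue T S xp xm yp ym i g ((T ^ n) d) = (S ^ n) (g d) := by
  have h1 := h.zpow_mem_iff_of_mem_domain (i := n) hd
  have h2 := h.ne_of_index h1
  have h3 : i ((T ^ n) d) = n := by
    have h4 := hi _ h2.1 h2.2
    apply le_antisymm
    · rw [← h1, h4]
    · rw [← h4, h1]
  rw [glue_of_ne h2.1 h2.2, h3, ← Homeomorph.mul_apply, ← zpow_add]
  simp

/-- Every point is one of the two fixed points or a translate of a point of the fundamental
domain. -/
lemma Filtration.trichotomy (h : Filtration T xp xm W) (x : X) :
    x = xp ∨ x = xm ∨ ∃ d ∈ W 0 \ W 1, ∃ n : ℤ, x = (T ^ n) d := by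
  by_cases h1 : x = xp
  · exact Or.inl h1
  by_cases h2 : x = xm
  · exact Or.inr (Or.inl h2)
  obtain ⟨i, hi⟩ := h.exists_index
  refine Or.inr (Or.inr ⟨_, h.zpow_neg_mem_domain (hi x h1 h2), i x, ?_⟩)
  rw [← Homeomorph.mul_apply, ← zpow_add]
  simp

lemma glue_leftInverse (h : Filtration T xp xm W) (h' : Filtration S yp ym Z)
    (hi : ∀ x, x ≠ xp → x ≠ xm → ∀ m, x ∈ W m ↔ m ≤ i x)
    (hj : ∀ y, y ≠ yp → y ≠ ym → ∀ m, y ∈ Z m ↔ m ≤ j y)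
    (hg : Set.MapsTo g (W 0 \ W 1) (Z 0 \ Z 1)) (hgg : ∀ x ∈ W 0 \ W 1, g' (g x) = x) (x : X) :
    glue S T yp ym xp xm j g' (glue T S xp xm yp ym i g x) = x := by
  rcases h.trichotomy x with rfl | rfl | ⟨d, hd, n, rfl⟩
  · rw [glue_p, glue_p]
  · rw [glue_m h, glue_m h']
  · rw [glue_zpow h hi hd, glue_zpow h' hj (hg hd), hgg d hd]

lemma glue_equivariant (h : Filtration T xp xm W) (h' : Filtration S yp ym Z)
    (hi : ∀ x, x ≠ xp → x ≠ xm → ∀ m, x ∈ W m ↔ m ≤ i x) (x : X) :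
    glue T S xp xm yp ym i g (T x) = S (glue T S xp xm yp ym i g x) := by
  rcases h.trichotomy x with rfl | rfl | ⟨d, hd, n, rfl⟩
  · rw [h.fix_p, glue_p, h'.fix_p]
  · rw [h.fix_m, glue_m h, h'.fix_m]
  · rw [glue_zpow h hi hd, ← Homeomorph.mul_apply, ← Homeomorph.mul_apply, ← zpow_one_add,
      ← zpow_one_add, glue_zpow h hi hd]

lemma glue_mem_iff (h : Filtration T xp xm W) (h' : Filtration S yp ym Z)
    (hi : ∀ x, x ≠ xp → x ≠ xm → ∀ m, x ∈ W m ↔ m ≤ i x)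
    (hg : Set.MapsTo g (W 0 \ W 1) (Z 0 \ Z 1)) (x : X) (m : ℤ) :
    glue T S xp xm yp ym i g x ∈ Z m ↔ x ∈ W m := by
  rcases h.trichotomy x with rfl | rfl | ⟨d, hd, n, rfl⟩
  · rw [glue_p]
    exact iff_of_true (h'.p_mem m) (h.p_mem m)
  · rw [glue_m h]
    exact iff_of_false (h'.m_notMem m) (h.m_notMem m)
  · rw [glue_zpow h hi hd, h'.zpow_mem_iff_of_mem_domain (hg hd), h.zpow_mem_iff_of_mem_domain hd]

/-- Continuity at the fixed points holds because `glue` matches the two filtrations, which give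
neighbourhood bases there; elsewhere `glue` is locally `S ^ n ∘ g ∘ T ^ (-n)`. -/
lemma glue_continuous [CompactSpace Y] (h : Filtration T xp xm W) (h' : Filtration S yp ym Z)
    (hi : ∀ x, x ≠ xp → x ≠ xm → ∀ m, x ∈ W m ↔ m ≤ i x)
    (hg : Set.MapsTo g (W 0 \ W 1) (Z 0 \ Z 1)) (hcont : ContinuousOn g (W 0 \ W 1)) :
    Continuous (glue T S xp xm yp ym i g) := by
  rw [continuous_iff_continuousAt]
  intro x
  rcases h.trichotomy x with rfl | rfl | ⟨d, hd, n, rfl⟩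
  · intro O hO
    rw [glue_p] at hO
    obtain ⟨m, hm⟩ := h'.exists_subset_nhds_p hO
    rw [Filter.mem_map]
    filter_upwards [(h.clopen m).isOpen.mem_nhds (h.p_mem m)] with z hz
    exact hm ((glue_mem_iff h h' hi hg z m).2 hz)
  · intro O hO
    rw [glue_m h] at hO
    obtain ⟨m, hm⟩ := h'.exists_subset_nhds_m hO
    rw [Filter.mem_map]
    filter_upwards [(h.clopen m).compl.isOpen.mem_nhds (h.m_notMem m)] with z hz
    exact hm fun hz' => hz ((glue_mem_iff h h' hi hg z m).1 hz')
  · have hback : ∀ z, (T ^ n) ((T ^ (-n)) z) = z := fun z => by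
      rw [← Homeomorph.mul_apply, ← zpow_add]
      simp
    have hback' : (T ^ (-n)) ((T ^ n) d) = d := by
      rw [← Homeomorph.mul_apply, ← zpow_add]
      simp
    have hev : glue T S xp xm yp ym i g =ᶠ[𝓝 ((T ^ n) d)]
        fun z => (S ^ n) (g ((T ^ (-n)) z)) := by
      have hopen := h.isClopen_domain.isOpen.preimage (T ^ (-n)).continuous
      filter_upwards [hopen.mem_nhds (by rwa [Set.mem_preimage, hback'])] with z hz
      rw [← glue_zpow (T := T) (i := i) h hi hz, hback]
    refine ContinuousAt.congr ?_ hev.symm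
    have h1 : ContinuousAt g ((T ^ (-n)) ((T ^ n) d)) := by
      rw [hback']
      exact hcont.continuousAt (h.isClopen_domain.isOpen.mem_nhds hd)
    exact (S ^ n).continuous.continuousAt.comp
      (ContinuousAt.comp (f := ⇑(T ^ (-n))) h1 (T ^ (-n)).continuous.continuousAt)

end Glue

end Dynamics

end NSCantor

/-- Up to topological conjugacy there is a unique homeomorphism with
north-south dynamics on the Cantor space: any two homeomorphisms with
north-south dynamics on Cantor spaces are topologically conjugate. -/
theorem northSouth_cantor_unique
    {X Y : Type*} [TopologicalSpace X] [TopologicalSpace Y]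
    [Nonempty X] [CompactSpace X] [TopologicalSpace.MetrizableSpace X]
    [TotallyDisconnectedSpace X]
    [Nonempty Y] [CompactSpace Y] [TopologicalSpace.MetrizableSpace Y]
    [TotallyDisconnectedSpace Y]
    (hX : ∀ x : X, (𝓝[≠] x).NeBot) (hY : ∀ y : Y, (𝓝[≠] y).NeBot)
    (T : X ≃ₜ X) (S : Y ≃ₜ Y)
    (hT : NorthSouth T) (hS : NorthSouth S) :
    ∃ Φ : X ≃ₜ Y, ∀ x : X, Φ (T x) = S (Φ x) := by
  obtain ⟨xp, xm, W, h⟩ := NSCantor.exists_filtration hT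
  obtain ⟨yp, ym, Z, h'⟩ := NSCantor.exists_filtration hS
  obtain ⟨i, hi⟩ := h.exists_index
  obtain ⟨j, hj⟩ := h'.exists_index
  obtain ⟨g, g', hcont, hg, hg', hgg, hgg'⟩ := NSCantor.exists_clopen_equiv hX hY
    h.isClopen_domain h'.isClopen_domain (h.domain_nonempty hX) (h'.domain_nonempty hY)
  let e : X ≃ Y :=
    { toFun := NSCantor.glue T S xp xm yp ym i g
      invFun := NSCantor.glue S T yp ym xp xm j g'
      left_inv := NSCantor.glue_leftInverse h h' hi hj hg hgg
      right_inv := NSCantor.glue_leftInverse h' h hj hi hg' hgg' }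
  have he : Continuous e := NSCantor.glue_continuous h h' hi hg hcont
  exact ⟨he.homeoOfEquivCompactToT2, NSCantor.glue_equivariant h h' hi⟩
end

section
/- Let A ⊆ ℤ^d be a finite positively generating set with 0 ∈ A. Then for every n ∈ ℕ, nA ⊆ n·conv(A) ∩ ℤ^d, and there exists N ∈ ℕ such that for every n > N, (n−N)·conv(A) ∩ ℤ^d ⊆ nA. -/
/-!
The inclusion `nA ⊆ n·conv(A)` is an induction using `(n + 1)·C = n·C + C` for convex `C`.

For the other direction, write a lattice point `x ∈ m·conv(A)` as `x = ∑ a, t a • a` with `t a ≥ 0`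
and `∑ a, t a = m`, and split each `t a` into its integer part and its fractional part.
The integer parts contribute a point of `mA`, because they sum to at most `m` and `0 ∈ A`.
The fractional parts contribute a remainder that is a lattice point and lies in the box
`|y i| ≤ ∑ a, |a i|`, which does not depend on `m` or `x`. This box contains finitely many lattice
points, so, as `A` is positively generating and `0 ∈ A`, it lies in `NA` for a single `N`. Hence
`x ∈ mA + NA = (m + N)A`.
-/

open Set
open scoped Pointwise

/-- `A ⊆ ℤ^d` is positively generating: every point is in some `n`-fold
Minkowski sum `nA`, `n ≥ 1`. -/
def PosGenZ {d : ℕ} (A : Set (Fin d → ℤ)) : Prop :=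
  ∀ g : Fin d → ℤ, ∃ n : ℕ, 1 ≤ n ∧ g ∈ n • A

/-- The canonical embedding `ℤ^d → ℝ^d`. -/
def coeR {d : ℕ} : (Fin d → ℤ) → (Fin d → ℝ) := fun x i => (x i : ℝ)

theorem coeR_injective {d : ℕ} : Function.Injective (coeR (d := d)) := by
  intro x y h
  funext i
  have := congrFun h i
  simpa [coeR] using this

theorem coeR_mem_smul_convexHull {d : ℕ} (A : Set (Fin d → ℤ)) (h0 : (0 : Fin d → ℤ) ∈ A)
    (n : ℕ) : ∀ x ∈ n • A, coeR x ∈ (n : ℝ) • convexHull ℝ (coeR '' A) := by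
  induction n with
  | zero =>
    intro x hx
    rw [zero_nsmul] at hx
    have hx0 : x = 0 := by simpa using hx
    subst hx0
    refine Set.mem_smul_set.2 ⟨coeR 0, subset_convexHull ℝ _ ⟨0, h0, rfl⟩, ?_⟩
    funext i
    simp [coeR]
  | succ n ih =>
    intro x hx
    rw [succ_nsmul] at hx
    obtain ⟨y, hy, z, hz, rfl⟩ := Set.mem_add.1 hx
    have hsum : coeR (y + z) = coeR y + coeR z := by
      funext i
      simp [coeR]
    rw [hsum, Nat.cast_succ, (convex_convexHull ℝ _).add_smul (Nat.cast_nonneg n) zero_le_one,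
      one_smul]
    exact Set.add_mem_add (ih y hy) (subset_convexHull ℝ _ ⟨z, hz, rfl⟩)

theorem sum_nsmul_mem_nsmul {M : Type*} [AddCommMonoid M] {A : Set M} (s : Finset M)
    (hs : ∀ a ∈ s, a ∈ A) (k : M → ℕ) : ∑ a ∈ s, k a • a ∈ (∑ a ∈ s, k a) • A := by
  classical
  induction s using Finset.induction_on with
  | empty => simp
  | insert a s ha ih =>
    rw [Finset.sum_insert ha, Finset.sum_insert ha, add_nsmul]
    exact Set.add_mem_add (Set.nsmul_mem_nsmul (hs a (Finset.mem_insert_self a s)))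
      (ih fun b hb => hs b (Finset.mem_insert_of_mem hb))

/-- As `0 ∈ A`, the sets `nA` increase with `n`, so a single `N` serves all points of `S`. -/
theorem exists_nsmul_superset {d : ℕ} {A : Set (Fin d → ℤ)} (h0 : (0 : Fin d → ℤ) ∈ A)
    (hgen : PosGenZ A) {S : Set (Fin d → ℤ)} (hS : S.Finite) : ∃ N : ℕ, S ⊆ N • A := by
  choose f _ hf using hgen
  obtain ⟨N, hN⟩ := (hS.image f).bddAbove
  exact ⟨N, fun y hy => Set.nsmul_subset_nsmul_right h0 (hN ⟨y, hy, rfl⟩) (hf y)⟩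

/-- Splitting the coefficients of a point of `m·conv(A)` into integer and fractional parts writes
a lattice point of `m·conv(A)` as a point of `mA` plus a remainder in a box independent of `m`. -/
theorem exists_add_of_mem_smul_convexHull {d : ℕ} {A : Set (Fin d → ℤ)} (hfin : A.Finite)
    (h0 : (0 : Fin d → ℤ) ∈ A) (m : ℕ) (x : Fin d → ℤ)
    (hx : coeR x ∈ (m : ℝ) • convexHull ℝ (coeR '' A)) :
    ∃ u ∈ m • A, ∃ y ∈ Set.Icc (-∑ a ∈ hfin.toFinset, |a|) (∑ a ∈ hfin.toFinset, |a|),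
      x = u + y := by
  classical
  obtain ⟨c, hc, hcx⟩ := Set.mem_smul_set.1 hx
  have himg : coeR '' A = ↑(hfin.toFinset.image coeR) := by simp
  rw [himg, Finset.mem_convexHull'] at hc
  obtain ⟨w, hw0, hw1, hwc⟩ := hc
  rw [Finset.sum_image coeR_injective.injOn] at hw1 hwc
  have ht0 : ∀ a ∈ hfin.toFinset, 0 ≤ (m : ℝ) * w (coeR a) := fun a ha =>
    mul_nonneg (Nat.cast_nonneg m) (hw0 _ (Finset.mem_image_of_mem _ ha))
  have hle : ∑ a ∈ hfin.toFinset, ⌊(m : ℝ) * w (coeR a)⌋₊ ≤ m := by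
    have h : (∑ a ∈ hfin.toFinset, (⌊(m : ℝ) * w (coeR a)⌋₊ : ℝ)) ≤ m := by
      calc (∑ a ∈ hfin.toFinset, (⌊(m : ℝ) * w (coeR a)⌋₊ : ℝ))
          ≤ ∑ a ∈ hfin.toFinset, (m : ℝ) * w (coeR a) :=
            Finset.sum_le_sum fun a ha => Nat.floor_le (ht0 a ha)
        _ = m := by rw [← Finset.mul_sum, hw1, mul_one]
    exact_mod_cast h
  set u : Fin d → ℤ := ∑ a ∈ hfin.toFinset, ⌊(m : ℝ) * w (coeR a)⌋₊ • a with hu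
  have hum : u ∈ m • A := Set.nsmul_subset_nsmul_right h0 hle
    (sum_nsmul_mem_nsmul hfin.toFinset (fun a ha => hfin.mem_toFinset.1 ha) _)
  have hbound : ∀ i, |(x - u) i| ≤ ∑ a ∈ hfin.toFinset, |a i| := by
    intro i
    have hxi : (x i : ℝ) = ∑ a ∈ hfin.toFinset, (m : ℝ) * w (coeR a) * (a i : ℝ) := by
      have h := congrFun hcx i
      rw [← hwc] at h
      simp only [Pi.smul_apply, Finset.sum_apply, smul_eq_mul, Finset.mul_sum, coeR] at h
      rw [← h]
      exact Finset.sum_congr rfl fun a _ => (mul_assoc _ _ _).symm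
    have hyi : (((x - u) i : ℤ) : ℝ) = ∑ a ∈ hfin.toFinset,
        ((m : ℝ) * w (coeR a) - (⌊(m : ℝ) * w (coeR a)⌋₊ : ℝ)) * (a i : ℝ) := by
      simp only [sub_mul, Finset.sum_sub_distrib]
      rw [← hxi, hu]
      simp
    have h : |(((x - u) i : ℤ) : ℝ)| ≤ ∑ a ∈ hfin.toFinset, |(a i : ℝ)| := by
      rw [hyi]
      refine (Finset.abs_sum_le_sum_abs _ _).trans (Finset.sum_le_sum fun a ha => ?_)
      rw [abs_mul]
      refine mul_le_of_le_one_left (abs_nonneg _) (abs_le.2 ⟨?_, ?_⟩)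
      · linarith [Nat.floor_le (ht0 a ha)]
      · linarith [Nat.lt_floor_add_one ((m : ℝ) * w (coeR a))]
    exact_mod_cast h
  refine ⟨u, hum, x - u, ⟨fun i => ?_, fun i => ?_⟩, by abel⟩
  · simpa using (abs_le.1 (hbound i)).1
  · simpa using (abs_le.1 (hbound i)).2

/-- Iterated Minkowski sums of a finite positively generating set `A ⊆ ℤ^d`
containing `0` are roughly the integer points of the dilated convex hull:
`nA ⊆ n·conv(A) ∩ ℤ^d` for all `n`, and there is `N` such that
`(n−N)·conv(A) ∩ ℤ^d ⊆ nA` for all `n > N`. -/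
theorem iterated_minkowski_sums_convex {d : ℕ}
    (A : Set (Fin d → ℤ)) (hfin : A.Finite) (h0 : (0 : Fin d → ℤ) ∈ A)
    (hgen : PosGenZ A) :
    (∀ n : ℕ, ∀ x ∈ n • A,
        coeR x ∈ (n : ℝ) • convexHull ℝ (coeR '' A)) ∧
      ∃ N : ℕ, ∀ n : ℕ, N < n → ∀ x : Fin d → ℤ,
        coeR x ∈ ((n - N : ℕ) : ℝ) • convexHull ℝ (coeR '' A) →
          x ∈ n • A := by
  refine ⟨coeR_mem_smul_convexHull A h0, ?_⟩
  obtain ⟨N, hN⟩ := exists_nsmul_superset h0 hgen (Set.finite_Icc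
    (-∑ a ∈ hfin.toFinset, |a|) (∑ a ∈ hfin.toFinset, |a|))
  refine ⟨N, fun n hn x hx => ?_⟩
  obtain ⟨u, hu, y, hy, rfl⟩ := exists_add_of_mem_smul_convexHull hfin h0 (n - N) x hx
  have h := Set.add_mem_add hu (hN hy)
  rwa [← add_nsmul, Nat.sub_add_cancel hn.le] at h
end

section
/- A nonempty additive subsemigroup S of ℤ^d is a subgroup of ℤ^d if and only if the convex hull of S in ℝ^d equals the real linear span of S. Equivalently, a nonempty subsemigroup S ⊆ ℤ^d is a group if and only if it is not contained in a proper half-space of its linear span. -/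
/-!
Three properties are shown to imply each other cyclically: `S` is a group, its convex hull is its
span, and no functional that is nonzero on the span is nonnegative on `S`.

* If `S` is a group, its convex hull contains `0` and is stable under addition and negation.
  By convexity it is then stable under all real scalars, so it is a subspace
  (`convexHull_eq_span_of_group`).
* A functional that is nonnegative on `S` is nonnegative on the convex hull. If the hull is a
  subspace, the functional vanishes there.
* Suppose there is no half-space and let `a ∈ S`. The cone generated by `S`, enlarged by a linear
  complement of the span, has nonempty interior, so Hahn-Banach separation puts `-a` in it; hence
  `-a = ∑ cᵢ sᵢ` with real `cᵢ ≥ 0` (`neg_mem_hull`). The integer vectors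
  `n a + ∑ ⌊n cᵢ⌋ sᵢ` stay bounded as `n` varies, so two of them, for `n < m`, coincide. Subtracting
  gives `(m - n) a + ∑ pᵢ sᵢ = 0` with `pᵢ ∈ ℕ` (`exists_nat_relation`), whence `-a ∈ S`.
-/

open Set

open scoped Pointwise

lemma coeR_add {d : ℕ} (a b : Fin d → ℤ) : coeR (a + b) = coeR a + coeR b := by
  ext i; simp [coeR]

lemma coeR_neg {d : ℕ} (a : Fin d → ℤ) : coeR (-a) = -coeR a := by
  ext i; simp [coeR]

lemma coeR_zero {d : ℕ} : coeR (0 : Fin d → ℤ) = 0 := by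
  ext i; simp [coeR]

lemma convexHull_eq_span_of_group {d : ℕ} (S : Set (Fin d → ℤ))
    (hadd : ∀ a ∈ S, ∀ b ∈ S, a + b ∈ S) (h0 : 0 ∈ S) (hneg : ∀ a ∈ S, -a ∈ S) :
    convexHull ℝ (coeR '' S) = (Submodule.span ℝ (coeR '' S) : Set (Fin d → ℝ)) := by
  set C := convexHull ℝ (coeR '' S) with hC
  have hCconv : Convex ℝ C := convex_convexHull ℝ _
  have hC0 : (0 : Fin d → ℝ) ∈ C := subset_convexHull ℝ _ ⟨0, h0, coeR_zero⟩
  have hCadd : ∀ x ∈ C, ∀ y ∈ C, x + y ∈ C := by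
    intro x hx y hy
    have h1 : x + y ∈ convexHull ℝ (coeR '' S + coeR '' S) := by
      rw [convexHull_add]; exact Set.add_mem_add hx hy
    refine convexHull_mono ?_ h1
    rintro _ ⟨_, ⟨a, ha, rfl⟩, _, ⟨b, hb, rfl⟩, rfl⟩
    exact ⟨a + b, hadd a ha b hb, coeR_add a b⟩
  have hCneg : ∀ x ∈ C, -x ∈ C := by
    intro x hx
    have h1 : -x ∈ convexHull ℝ (-(coeR '' S)) := by
      rw [convexHull_neg]; simpa using hx
    refine convexHull_mono ?_ h1
    rintro y ⟨a, ha, hay⟩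
    exact ⟨-a, hneg a ha, by rw [coeR_neg, hay, neg_neg]⟩
  have hCnat : ∀ (n : ℕ), ∀ x ∈ C, (n : ℝ) • x ∈ C := by
    intro n x hx
    induction n with
    | zero => simpa using hC0
    | succ k ih =>
      rw [Nat.cast_succ, add_smul, one_smul]
      exact hCadd _ ih _ hx
  have hCpos : ∀ c : ℝ, 0 ≤ c → ∀ x ∈ C, c • x ∈ C := by
    intro c hc x hx
    obtain ⟨n, hn⟩ := exists_nat_gt c
    have hn0 : (0 : ℝ) < n := hc.trans_lt hn
    have h1 : (c / n) • x ∈ C :=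
      hCconv.smul_mem_of_zero_mem hC0 hx
        ⟨div_nonneg hc hn0.le, (div_le_one hn0).2 hn.le⟩
    have h2 := hCnat n _ h1
    rwa [smul_smul, mul_div_cancel₀ _ hn0.ne'] at h2
  let V : Submodule ℝ (Fin d → ℝ) :=
    { carrier := C
      add_mem' := fun {x y} hx hy => hCadd x hx y hy
      zero_mem' := hC0
      smul_mem' := by
        intro c x hx
        rcases le_total 0 c with hc | hc
        · exact hCpos c hc x hx
        · have := hCneg _ (hCpos (-c) (by linarith) x hx)
          simpa using this }
  apply Set.Subset.antisymm
  · exact convexHull_min Submodule.subset_span (Submodule.convex _)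
  · have : Submodule.span ℝ (coeR '' S) ≤ V := Submodule.span_le.2 (subset_convexHull ℝ _)
    exact this

lemma not_halfspace_of_convexHull_eq_span {d : ℕ} (S : Set (Fin d → ℤ))
    (h : convexHull ℝ (coeR '' S) = (Submodule.span ℝ (coeR '' S) : Set (Fin d → ℝ))) :
    ¬ ∃ ℓ : (Fin d → ℝ) →ₗ[ℝ] ℝ,
            (∃ x ∈ Submodule.span ℝ (coeR '' S), ℓ x ≠ 0) ∧
              ∀ a ∈ S, 0 ≤ ℓ (coeR a) := by
  rintro ⟨ℓ, ⟨x, hx, hne⟩, hpos⟩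
  have hnn : ∀ y ∈ Submodule.span ℝ (coeR '' S), 0 ≤ ℓ y := by
    intro y hy
    have hy' : y ∈ convexHull ℝ (coeR '' S) := by rw [h]; exact hy
    have hsub : coeR '' S ⊆ {z | 0 ≤ ℓ z} := by
      rintro _ ⟨a, ha, rfl⟩; exact hpos a ha
    exact convexHull_min hsub (convex_halfSpace_ge ℓ.isLinear 0) hy'
  have h1 := hnn x hx
  have h2 := hnn (-x) (Submodule.neg_mem _ hx)
  rw [map_neg] at h2
  exact hne (by linarith)

/-- If a set `T` lies in no proper half-space of its span, then the convex cone generated by `T`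
contains the negative of each element of `T` (it is in fact the whole span). -/
lemma neg_mem_hull {d : ℕ} (T : Set (Fin d → ℝ))
    (h : ¬ ∃ ℓ : (Fin d → ℝ) →ₗ[ℝ] ℝ,
            (∃ x ∈ Submodule.span ℝ T, ℓ x ≠ 0) ∧ ∀ a ∈ T, 0 ≤ ℓ a)
    (a : Fin d → ℝ) (ha : a ∈ T) : -a ∈ PointedCone.hull ℝ T := by
  obtain ⟨W, hW⟩ := Submodule.exists_isCompl (Submodule.span ℝ T)
  -- Adding the complement `W` makes the cone full-dimensional.
  let K : PointedCone ℝ (Fin d → ℝ) := PointedCone.hull ℝ T ⊔ PointedCone.ofSubmodule W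
  have hTK : ∀ x ∈ T, x ∈ K := fun x hx =>
    Submodule.mem_sup_left (PointedCone.subset_hull hx)
  have hWK : ∀ x ∈ W, x ∈ K := fun x hx => Submodule.mem_sup_right hx
  have hspan : Submodule.span ℝ (K : Set (Fin d → ℝ)) = ⊤ := by
    rw [eq_top_iff, ← hW.sup_eq_top]
    exact sup_le (Submodule.span_mono hTK) (fun x hx => Submodule.subset_span (hWK x hx))
  have hint : (interior (K : Set (Fin d → ℝ))).Nonempty := by
    rw [K.convex.interior_nonempty_iff_affineSpan_eq_top]
    have h0 : insert 0 (K : Set (Fin d → ℝ)) = K := Set.insert_eq_of_mem K.zero_mem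
    have := affineSpan_insert_zero (k := ℝ) (K : Set (Fin d → ℝ))
    rw [h0, hspan] at this
    apply SetLike.coe_injective
    simpa using this
  have hmem : -a ∈ K := by
    by_contra hna
    obtain ⟨f, u, hf0, hfK, -⟩ := geometric_hahn_banach_of_nonempty_interior K.convex
      (convex_singleton (-a))
      (Set.disjoint_singleton_right.2 fun hi => hna (interior_subset hi)) hint
      (Set.singleton_nonempty _)
    -- A functional bounded above on a cone is nonpositive there.
    have hnp : ∀ k ∈ K, f k ≤ 0 := by
      intro k hk
      by_contra! hpos
      have h1 := hfK _ (K.smul_mem (r := (|u| + 1) / f k) (by positivity) hk)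
      rw [map_smul, smul_eq_mul, div_mul_cancel₀ _ hpos.ne'] at h1
      linarith [le_abs_self u]
    have hW0 : ∀ w ∈ W, f w = 0 := by
      intro w hw
      have h1 := hnp w (hWK w hw)
      have h2 := hnp (-w) (hWK _ (W.neg_mem hw))
      rw [map_neg] at h2
      linarith
    apply h
    refine ⟨-(f : (Fin d → ℝ) →ₗ[ℝ] ℝ), ?_, fun x hx => ?_⟩
    · by_contra! hz
      apply hf0
      ext1 x
      have hx : x ∈ Submodule.span ℝ T ⊔ W := by rw [hW.sup_eq_top]; trivial
      obtain ⟨v, hv, w, hw, rfl⟩ := Submodule.mem_sup.1 hx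
      have := hz v hv
      simp at this
      simp [this, hW0 w hw]
    · simpa using hnp x (hTK x hx)
  obtain ⟨k, hk, w, hw, hkw⟩ := Submodule.mem_sup.1 hmem
  have hkV : k ∈ Submodule.span ℝ T := PointedCone.hull_le_span (R := ℝ) T hk
  have hwV : w ∈ Submodule.span ℝ T := by
    have : w = -a - k := by rw [← hkw]; abel
    rw [this]
    exact Submodule.sub_mem _ (Submodule.neg_mem _ (Submodule.subset_span ha)) hkV
  have hw0 : w = 0 := Submodule.disjoint_def.1 hW.disjoint w hwV hw
  rw [← hkw, hw0, add_zero]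
  exact hk

/-- A nonnegative real relation between integer vectors yields a nonnegative integer one in which
`a` still occurs. -/
lemma exists_nat_relation {d n : ℕ} (a : Fin d → ℤ) (s : Fin n → Fin d → ℤ) (c : Fin n → ℝ)
    (hc : ∀ i, 0 ≤ c i) (h : ∑ i, c i • coeR (s i) = -coeR a) :
    ∃ (q : ℕ) (p : Fin n → ℕ), (q + 1) • a + ∑ i, p i • s i = 0 := by
  let F : ℕ → Fin d → ℤ := fun k => (k : ℤ) • a + ∑ i, ⌊(k : ℝ) * c i⌋ • s i
  let B : Fin d → ℤ := fun j => ∑ i, |s i j|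
  -- `F k = -∑ i, fract (k * c i) • s i`, which is bounded independently of `k`.
  have hF : ∀ k, F k ∈ Set.Icc (-B) B := by
    intro k
    have key : ∀ j, |F k j| ≤ B j := by
      intro j
      have hj : ∑ i, c i * (s i j : ℝ) = -(a j : ℝ) := by
        have := congrFun h j
        simpa [coeR, Finset.sum_apply] using this
      have e : ((F k j : ℤ) : ℝ) = -∑ i, Int.fract ((k : ℝ) * c i) * (s i j : ℝ) := by
        have e1 : (a j : ℝ) = -∑ i, c i * (s i j : ℝ) := by linarith
        simp only [F, Pi.add_apply, Pi.smul_apply, Finset.sum_apply, smul_eq_mul]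
        push_cast
        rw [e1, mul_neg, Finset.mul_sum, ← Finset.sum_neg_distrib, ← Finset.sum_neg_distrib,
          ← Finset.sum_add_distrib]
        refine Finset.sum_congr rfl fun i _ => ?_
        rw [Int.fract]
        ring
      have : |((F k j : ℤ) : ℝ)| ≤ ((B j : ℤ) : ℝ) := by
        rw [e, abs_neg]
        simp only [B]
        push_cast
        refine (Finset.abs_sum_le_sum_abs _ _).trans (Finset.sum_le_sum fun i _ => ?_)
        rw [abs_mul, abs_of_nonneg (Int.fract_nonneg _)]
        exact mul_le_of_le_one_left (abs_nonneg _) (Int.fract_lt_one _).le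
      exact_mod_cast this
    exact ⟨fun j => (abs_le.1 (key j)).1, fun j => (abs_le.1 (key j)).2⟩
  obtain ⟨k, m, hkm, he⟩ := (Set.finite_Icc (-B) B).exists_lt_map_eq_of_forall_mem hF
  have hmono : ∀ i, ⌊(k : ℝ) * c i⌋ ≤ ⌊(m : ℝ) * c i⌋ := fun i =>
    Int.floor_le_floor (mul_le_mul_of_nonneg_right (by exact_mod_cast hkm.le) (hc i))
  refine ⟨m - k - 1, fun i => (⌊(m : ℝ) * c i⌋ - ⌊(k : ℝ) * c i⌋).toNat, ?_⟩
  have hq : m - k - 1 + 1 = m - k := by omega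
  rw [hq]
  funext j
  have hej : F m j - F k j = 0 := by rw [he]; ring
  have hsub : ((m - k : ℕ) : ℤ) = m - k := by omega
  have hto : ∀ i, ((⌊(m : ℝ) * c i⌋ - ⌊(k : ℝ) * c i⌋).toNat : ℤ)
      = ⌊(m : ℝ) * c i⌋ - ⌊(k : ℝ) * c i⌋ := fun i => Int.toNat_of_nonneg (by linarith [hmono i])
  rw [Pi.zero_apply, ← hej]
  simp only [F, Pi.add_apply, Pi.smul_apply, Finset.sum_apply, smul_eq_mul]
  simp only [nsmul_eq_mul, hsub, hto, sub_mul, Finset.sum_sub_distrib]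
  ring

lemma group_of_not_halfspace {d : ℕ} (S : Set (Fin d → ℤ)) (hne : S.Nonempty)
    (hadd : ∀ a ∈ S, ∀ b ∈ S, a + b ∈ S)
    (h : ¬ ∃ ℓ : (Fin d → ℝ) →ₗ[ℝ] ℝ,
            (∃ x ∈ Submodule.span ℝ (coeR '' S), ℓ x ≠ 0) ∧
              ∀ a ∈ S, 0 ≤ ℓ (coeR a)) :
    0 ∈ S ∧ ∀ a ∈ S, -a ∈ S := by
  have hneg : ∀ a ∈ S, -a ∈ S := by
    intro a ha
    have h1 := neg_mem_hull (coeR '' S) (by simpa using h) (coeR a) ⟨a, ha, rfl⟩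
    obtain ⟨n, c, g, hcg⟩ := Submodule.mem_span_set'.1 h1
    choose s hs hsg using fun i => (g i).2
    obtain ⟨q, p, hpq⟩ := exists_nat_relation a s (fun i => (c i : ℝ)) (fun i => (c i).2) (by
      rw [← hcg]
      exact Finset.sum_congr rfl fun i _ => by rw [hsg i]; rfl)
    let M : AddSubmonoid (Fin d → ℤ) :=
      { carrier := insert 0 S
        zero_mem' := Set.mem_insert _ _
        add_mem' := by
          rintro x y (rfl | hx) (rfl | hy)
          · simp
          · simp [hy]
          · simp [hx]
          · exact Or.inr (hadd x hx y hy) }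
    have hSM : ∀ x ∈ S, x ∈ M := fun x hx => Or.inr hx
    have hm : q • a + ∑ i, p i • s i ∈ M :=
      M.add_mem (M.nsmul_mem (hSM a ha) q)
        (M.sum_mem fun i _ => M.nsmul_mem (hSM _ (hs i)) (p i))
    have e : -a = q • a + ∑ i, p i • s i := by
      rw [succ_nsmul] at hpq
      rw [neg_eq_iff_add_eq_zero, ← hpq]
      abel
    rw [← e] at hm
    rcases hm with h0 | hm
    · have : a = 0 := neg_eq_zero.1 h0
      rw [this] at ha ⊢
      simpa using ha
    · exact hm
  obtain ⟨a, ha⟩ := hne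
  exact ⟨by simpa using hadd a ha (-a) (hneg a ha), hneg⟩

/-- A nonempty additive subsemigroup `S` of `ℤ^d` is a subgroup if and only if
the convex hull of `S` in `ℝ^d` equals the real linear span of `S`;
equivalently, if and only if `S` is not contained in a proper half-space of
its linear span. -/
theorem subsemigroup_isSubgroup_iff_convexHull_eq_span {d : ℕ}
    (S : Set (Fin d → ℤ)) (hne : S.Nonempty)
    (hadd : ∀ a ∈ S, ∀ b ∈ S, a + b ∈ S) :
    ((0 ∈ S ∧ ∀ a ∈ S, -a ∈ S) ↔
        convexHull ℝ (coeR '' S) =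
          (Submodule.span ℝ (coeR '' S) : Set (Fin d → ℝ))) ∧
      ((0 ∈ S ∧ ∀ a ∈ S, -a ∈ S) ↔
        ¬ ∃ ℓ : (Fin d → ℝ) →ₗ[ℝ] ℝ,
            (∃ x ∈ Submodule.span ℝ (coeR '' S), ℓ x ≠ 0) ∧
              ∀ a ∈ S, 0 ≤ ℓ (coeR a)) := by
  have h1 := fun hg : 0 ∈ S ∧ ∀ a ∈ S, -a ∈ S => convexHull_eq_span_of_group S hadd hg.1 hg.2
  have h2 := not_halfspace_of_convexHull_eq_span S
  have h3 := group_of_not_halfspace S hne hadd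
  exact ⟨⟨h1, fun h => h3 (h2 h)⟩, ⟨fun h => h2 (h1 h), h3⟩⟩
end

section
/- Let d ≥ 2 and let A ⊆ ℤ^d be a finite positively generating set with 0 ∈ A. Then the natural extension of φ_A : 𝒫(ℤ^d) → 𝒫(ℤ^d) is perfect, i.e. the space X̂ = {x ∈ (𝒫(ℤ^d))^ℤ : x_{n+1} = φ_A(x_n) for all n ∈ ℤ}, with the product topology, has no isolated points. -/
/-!
The natural extension is shown to have no isolated points by perturbing an orbit `x` outside a
finite window. Since earlier sets of an orbit determine the later ones locally, a neighbourhood of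
`x` contains all orbits that agree with `x` on a finite set `F` at one early time, which may be
shifted to time `0`. Suppose `x` is the only orbit agreeing with itself on `F` at time `0`.

* Every point `v ∈ x 0` has, by pigeonhole, a step `t ∈ A` occurring arbitrarily often in its past,
  and then the *cone orbit* `n ↦ v + n • t + M_t` lies in `x`, where `M_t` is the monoid generated by
  `A - t` (`IsOrbit.exists_coneOrbit_subset`). Replacing `t` by an extreme point `e` of the smallest
  face of `A` containing `t` gives a smaller cone orbit through `v` (`exists_extreme`,
  `coneOrbit_subset`). The union of these over `v ∈ F ∩ x 0` agrees with `x` on `F`, so `x` is a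
  finite union of cone orbits at extreme points.
* Adding to `x` a half-space orbit `n ↦ {ℓ ≤ τ + n * max ℓ(A)}` that avoids `F` at time `0` does not
  change `x` on `F`, so `x` contains all such half-space orbits.

As `d ≥ 2`, there is a non-zero `ℓ` whose maximum on `A` is attained at two distinct points `s`, `s'`
(`exists_supporting_edge`). The points `c - m • (s + s')` at times `-2m` lie in a half-space orbit
for `ℓ`, but cannot all lie in finitely many cone orbits at extreme points: Dickson's lemma would
produce a line in the tangent monoid of an extreme point (`exists_not_mem_coneOrbits`). This
contradiction is `exists_perturbation`.
-/

open Filter Set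
open scoped Pointwise

/-- The product (cylinder) topology on `𝒫(V) ≅ {0,1}^V`. -/
noncomputable def cylTop (V : Type*) : TopologicalSpace (Set V) :=
  TopologicalSpace.induced
    (fun (S : Set V) (v : V) => @decide (v ∈ S) (Classical.propDecidable _))
    inferInstance

/-- The natural extension of `φ_A : 𝒫(ℤ^d) → 𝒫(ℤ^d)`, `φ_A(W) = W + A`, as a
space: bi-infinite orbits `x : ℤ → 𝒫(ℤ^d)` with `x (n+1) = φ_A (x n)`. -/
def NatExt {d : ℕ} (A : Set (Fin d → ℤ)) : Type _ :=
  {x : ℤ → Set (Fin d → ℤ) // ∀ n : ℤ, x (n + 1) = x n + A}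

/-- The topology on the natural extension: the subspace topology induced from
the product topology on `(𝒫(ℤ^d))^ℤ`, where each factor carries the product
topology of `{0,1}^{ℤ^d}`. -/
noncomputable def natExtTop {d : ℕ} (A : Set (Fin d → ℤ)) :
    TopologicalSpace (NatExt A) :=
  TopologicalSpace.induced (Subtype.val)
    (@Pi.topologicalSpace ℤ (fun _ => Set (Fin d → ℤ))
      (fun _ => cylTop (Fin d → ℤ)))

/-! ### Tangent monoids and extreme points -/

section Cones

variable {V : Type*} [AddCommGroup V]

/-- The tangent monoid of `A` at `e`: the submonoid generated by the differences `a - e`, `a ∈ A`,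
presented through its `ℕ`-combinations. -/
def tangentMonoid (A : Finset V) (e : V) : AddSubmonoid V where
  carrier := {s | ∃ f : V → ℕ, s = ∑ a ∈ A, f a • (a - e)}
  zero_mem' := ⟨fun _ => 0, by simp⟩
  add_mem' := by
    rintro _ _ ⟨f, rfl⟩ ⟨g, rfl⟩
    exact ⟨fun a => f a + g a, by simp [add_smul, Finset.sum_add_distrib]⟩

/-- `e` is extreme for `A`: an average of points of `A` equals `e` only if all the points with
positive weight equal `e`. -/
def ExtremeIn (A : Finset V) (e : V) : Prop :=
  ∀ f : V → ℕ, ∑ a ∈ A, f a • (a - e) = 0 → ∀ a ∈ A, f a ≠ 0 → a = e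

lemma sub_mem_tangentMonoid {A : Finset V} {a : V} (ha : a ∈ A) (e : V) :
    a - e ∈ tangentMonoid A e := by
  classical
  refine ⟨fun b => if b = a then 1 else 0, ?_⟩
  simp [ite_smul, ha]

lemma sum_smul_sub_mem {A : Finset V} (f : V → ℕ) (e : V) :
    ∑ a ∈ A, f a • (a - e) ∈ tangentMonoid A e := ⟨f, rfl⟩

lemma sum_smul_sub (A : Finset V) (f : V → ℕ) (e : V) :
    ∑ a ∈ A, f a • (a - e) = ∑ a ∈ A, f a • a - (∑ a ∈ A, f a) • e := by
  simp [smul_sub, Finset.sum_sub_distrib, Finset.sum_smul]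

/-- If a point has positive weight in a vanishing combination of the `a - e`, and the tangent
monoid at `t` contains `t - e`, then it also contains `t - a₀`: the points `a` with
`t - a ∈ tangentMonoid A t` form a face of `A`. -/
lemma face_closed {A : Finset V} {t e : V} (hte : t - e ∈ tangentMonoid A t) {f : V → ℕ}
    (hf : ∑ a ∈ A, f a • (a - e) = 0) {a₀ : V} (ha₀ : a₀ ∈ A) (h0 : f a₀ ≠ 0) :
    t - a₀ ∈ tangentMonoid A t := by
  classical
  have h1 : t - a₀ = ((f a₀ - 1) • (a₀ - t) + ∑ a ∈ A.erase a₀, f a • (a - t))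
      + (∑ a ∈ A, f a) • (t - e) := by
    have h2 : ∑ a ∈ A, f a • (a - t) + (∑ a ∈ A, f a) • (t - e) = 0 := by
      rw [← hf, sum_smul_sub, sum_smul_sub, smul_sub]; abel
    rw [← Finset.add_sum_erase A _ ha₀] at h2
    obtain ⟨k, hk⟩ := Nat.exists_eq_succ_of_ne_zero h0
    rw [hk] at h2 ⊢
    rw [Nat.succ_eq_add_one, add_smul, one_smul] at h2
    rw [Nat.succ_eq_add_one, Nat.add_sub_cancel, ← sub_eq_zero, ← neg_eq_zero, ← h2]
    abel
  rw [h1]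
  refine add_mem (add_mem (nsmul_mem (sub_mem_tangentMonoid ha₀ t) _) (sum_mem ?_))
    (nsmul_mem hte _)
  intro a ha
  exact nsmul_mem (sub_mem_tangentMonoid (Finset.mem_of_mem_erase ha) t) _

/-- Every `t ∈ A` has an extreme point `e` in the smallest face of `A` containing `t`. It is found
as the largest element of that face for a translation-invariant linear order, which is given by an
embedding `φ` of `V` into an ordered group. -/
lemma exists_extreme {L : Type*} [AddCommGroup L] [LinearOrder L] [IsOrderedAddMonoid L]
    (φ : V →+ L) (hφ : Function.Injective φ) {A : Finset V} {t : V} (ht : t ∈ A) :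
    ∃ e ∈ A, ExtremeIn A e ∧ t - e ∈ tangentMonoid A t := by
  classical
  obtain ⟨e, he, hmax⟩ := Finset.exists_max_image (A.filter fun a => t - a ∈ tangentMonoid A t) φ
    ⟨t, by simp [ht, zero_mem]⟩
  rw [Finset.mem_filter] at he
  refine ⟨e, he.1, ?_, he.2⟩
  intro f hf a ha hfa
  have hle : ∀ b ∈ A, f b • (φ b - φ e) ≤ 0 := by
    intro b hb
    by_cases hfb : f b = 0
    · simp [hfb]
    · refine nsmul_nonpos ?_ _
      rw [sub_nonpos]
      exact hmax b (Finset.mem_filter.2 ⟨hb, face_closed he.2 hf hb hfb⟩)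
  have hsum : ∑ b ∈ A, f b • (φ b - φ e) = 0 := by
    have := congrArg φ hf
    simpa using this
  have h3 := (Finset.sum_eq_zero_iff_of_nonpos hle).1 hsum a ha
  have h4 : φ a - φ e = 0 := by
    rcases smul_eq_zero.1 h3 with h | h
    · exact absurd h hfa
    · exact h
  exact hφ (sub_eq_zero.1 h4)

/-- The tangent monoid at an extreme point contains no line: the negative of a positive multiple of
`(s - e) + (s' - e)` belongs to it only in the trivial case. -/
lemma ExtremeIn.eq_of_add {A : Finset V} {e s s' : V} (he : ExtremeIn A e) (hs : s ∈ A)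
    (hs' : s' ∈ A) {k : ℕ} (hk : k ≠ 0) {h : V → ℕ}
    (hsum : ∑ a ∈ A, h a • (a - e) + k • ((s - e) + (s' - e)) = 0) : s = e ∧ s' = e := by
  classical
  have key := he (fun a => h a + k * ((if a = s then 1 else 0) + (if a = s' then 1 else 0))) (by
    rw [← hsum]
    simp only [add_smul, mul_smul, Finset.sum_add_distrib, ← Finset.smul_sum, ite_smul, one_smul,
      zero_smul, Finset.sum_ite_eq', hs, hs', if_true])
  exact ⟨key s hs (by simp; omega), key s' hs' (by simp; omega)⟩

end Cones

/-! ### Orbits and the cone orbits they contain -/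

lemma mem_time_congr {V : Type*} {x : ℤ → Set V} {n n' : ℤ} {u u' : V} (h : u ∈ x n) (hu : u' = u)
    (hn : n' = n) : u' ∈ x n' := by
  rwa [hu, hn]

section Orbits

variable {V : Type*} [AddCommGroup V]

/-- `x` is a bi-infinite orbit of `W ↦ W + A`. -/
def IsOrbit (A : Finset V) (x : ℤ → Set V) : Prop :=
  ∀ n : ℤ, x (n + 1) = x n + (A : Set V)

lemma IsOrbit.add_nsmul_mem {A : Finset V} {x : ℤ → Set V} (hx : IsOrbit A x) {a : V} (ha : a ∈ A)
    {n : ℤ} {u : V} (hu : u ∈ x n) (k : ℕ) : u + k • a ∈ x (n + k) := by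
  induction k with
  | zero => simpa using hu
  | succ k ih =>
    have := hx (n + k)
    rw [Nat.cast_succ, ← add_assoc, this, succ_nsmul, ← add_assoc]
    exact Set.add_mem_add ih ha

lemma IsOrbit.add_sum_mem {A : Finset V} {x : ℤ → Set V} (hx : IsOrbit A x) {n : ℤ} {u : V}
    (hu : u ∈ x n) (f : V → ℕ) : u + ∑ a ∈ A, f a • a ∈ x (n + ((∑ a ∈ A, f a : ℕ) : ℤ)) := by
  classical
  suffices H : ∀ B ⊆ A, u + ∑ a ∈ B, f a • a ∈ x (n + ((∑ a ∈ B, f a : ℕ) : ℤ)) from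
    H A subset_rfl
  intro B
  induction B using Finset.induction_on with
  | empty => intro _; simpa using hu
  | insert b B hb ih =>
    intro hB
    rw [Finset.insert_subset_iff] at hB
    have := hx.add_nsmul_mem hB.1 (ih hB.2) (f b)
    rw [Finset.sum_insert hb, Finset.sum_insert hb]
    exact mem_time_congr this (by abel) (by push_cast; ring)

/-- Going back `k` steps in time: a point at time `0` is reached from a point at time `-k` by `k`
steps in `A`, of which `f a` equal `a`. -/
lemma IsOrbit.exists_back {A : Finset V} {x : ℤ → Set V} (hx : IsOrbit A x) {v : V}
    (hv : v ∈ x 0) (k : ℕ) :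
    ∃ f : V → ℕ, ∑ a ∈ A, f a = k ∧ v - ∑ a ∈ A, f a • a ∈ x (-k) := by
  classical
  induction k with
  | zero => exact ⟨fun _ => 0, by simp, by simpa using hv⟩
  | succ k ih =>
    obtain ⟨f, hf, hm⟩ := ih
    have h1 := hx (-((k + 1 : ℕ) : ℤ))
    have h2 : -((k + 1 : ℕ) : ℤ) + 1 = -k := by push_cast; ring
    rw [h2] at h1
    rw [h1] at hm
    obtain ⟨u, hu, b, hb, hub⟩ := Set.mem_add.1 hm
    have hb' : b ∈ A := hb
    refine ⟨fun a => f a + if a = b then 1 else 0, ?_, ?_⟩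
    · simp [Finset.sum_add_distrib, hf, hb']
    · have : v - ∑ a ∈ A, (f a + if a = b then 1 else 0) • a = u := by
        simp only [add_smul, Finset.sum_add_distrib, ite_smul, one_smul, zero_smul,
          Finset.sum_ite_eq', hb', if_true]
        rw [← sub_sub, ← hub]; abel
      rw [this]; exact hu

/-- By pigeonhole, some `t ∈ A` can be used arbitrarily often in the past of `v`. -/
lemma IsOrbit.exists_recurrent_step {A : Finset V} {x : ℤ → Set V} (hx : IsOrbit A x) {v : V}
    (hv : v ∈ x 0) :
    ∃ t ∈ A, ∀ m : ℕ, ∃ f : V → ℕ,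
      v - m • t - ∑ a ∈ A, f a • a ∈ x (-(m : ℤ) - ((∑ a ∈ A, f a : ℕ) : ℤ)) := by
  classical
  by_contra! hcon
  choose! M hM using hcon
  obtain ⟨f, hf, hm⟩ := hx.exists_back hv (∑ a ∈ A, M a + 1)
  obtain ⟨t, ht, hlt⟩ : ∃ t ∈ A, M t ≤ f t := by
    by_contra! hcon
    have := Finset.sum_le_sum fun a ha => (hcon a ha).le
    omega
  refine hM t ht (fun a => f a - if a = t then M t else 0) ?_
  have hpt : ∀ a, f a = (f a - if a = t then M t else 0) + if a = t then M t else 0 := by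
    intro a
    split_ifs with h
    · subst h; omega
    · simp
  have e1 : ∑ a ∈ A, f a = ∑ a ∈ A, (f a - if a = t then M t else 0) + M t := by
    conv_lhs => rw [Finset.sum_congr rfl fun a _ => hpt a]
    rw [Finset.sum_add_distrib]; simp [ht]
  have e2 : ∑ a ∈ A, f a • a = ∑ a ∈ A, (f a - if a = t then M t else 0) • a + M t • t := by
    conv_lhs => rw [Finset.sum_congr rfl fun a _ => congrArg (· • a) (hpt a)]
    simp only [add_smul, Finset.sum_add_distrib, ite_smul, zero_smul, Finset.sum_ite_eq', ht,
      if_true]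
  rw [← hf, e1, e2] at hm
  exact mem_time_congr hm (by abel) (by push_cast; ring)

/-- The orbit consisting of the translates of a tangent monoid. -/
def coneOrbit (A : Finset V) (v e : V) (n : ℤ) : Set V :=
  {w | ∃ s ∈ tangentMonoid A e, w = v + n • e + s}

lemma isOrbit_coneOrbit {A : Finset V} (v : V) {e : V} (he : e ∈ A) :
    IsOrbit A (coneOrbit A v e) := by
  intro n
  ext w
  rw [Set.mem_add]
  constructor
  · rintro ⟨s, hs, rfl⟩
    exact ⟨v + n • e + s, ⟨s, hs, rfl⟩, e, he, by rw [add_smul, one_smul]; abel⟩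
  · rintro ⟨_, ⟨s, hs, rfl⟩, a, ha, rfl⟩
    refine ⟨s + (a - e), add_mem hs (sub_mem_tangentMonoid ha e), ?_⟩
    rw [add_smul, one_smul]; abel

/-- If `e` lies in the smallest face of `t`, the cone orbit at `e` lies in that at `t`. -/
lemma coneOrbit_subset {A : Finset V} {t e : V} (he : e ∈ A) (hte : t - e ∈ tangentMonoid A t)
    (v : V) (n : ℤ) : coneOrbit A v e n ⊆ coneOrbit A v t n := by
  rintro _ ⟨_, ⟨f, rfl⟩, rfl⟩
  have hn : n • (e - t) ∈ tangentMonoid A t := by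
    obtain ⟨k, rfl | rfl⟩ := n.eq_nat_or_neg
    · rw [natCast_zsmul]
      exact nsmul_mem (sub_mem_tangentMonoid he t) k
    · rw [neg_smul, ← smul_neg, neg_sub, natCast_zsmul]
      exact nsmul_mem hte k
  refine ⟨n • (e - t) + (∑ a ∈ A, f a • (a - t) + (∑ a ∈ A, f a) • (t - e)),
    add_mem hn (add_mem (sum_smul_sub_mem f t) (nsmul_mem hte _)), ?_⟩
  rw [sum_smul_sub, sum_smul_sub, smul_sub, smul_sub]; abel

lemma IsOrbit.exists_coneOrbit_subset {A : Finset V} {x : ℤ → Set V} (hx : IsOrbit A x) {v : V}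
    (hv : v ∈ x 0) : ∃ t ∈ A, ∀ n, coneOrbit A v t n ⊆ x n := by
  obtain ⟨t, ht, h⟩ := hx.exists_recurrent_step hv
  refine ⟨t, ht, ?_⟩
  rintro n _ ⟨_, ⟨g, rfl⟩, rfl⟩
  -- enough steps `t` of the past of `v` are traded for the steps counted by `g`
  obtain ⟨f, hf⟩ := h (∑ a ∈ A, g a + n.natAbs)
  have h1 := hx.add_nsmul_mem ht (hx.add_sum_mem (hx.add_sum_mem hf f) g) (n.natAbs + n).toNat
  have h2 : (((n.natAbs + n).toNat : ℕ) : ℤ) = n.natAbs + n := Int.toNat_of_nonneg (by omega)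
  rw [sum_smul_sub]
  refine mem_time_congr h1 ?_ ?_
  · rw [← natCast_zsmul t (n.natAbs + n).toNat, h2, add_smul, add_smul, natCast_zsmul]; abel
  · rw [h2]; push_cast; ring

end Orbits

/-! ### Supporting half-spaces and the perturbation -/

section Perturbation

variable {V : Type*} [AddCommGroup V]

/-- Half-spaces moving with the maximal speed of `ℓ` on `A` form an orbit. -/
lemma isOrbit_halfSpace {A : Finset V} (ℓ : V →+ ℤ) {s : V} (hs : s ∈ A)
    (hmax : ∀ a ∈ A, ℓ a ≤ ℓ s) (τ : ℤ) : IsOrbit A fun n => {w | ℓ w ≤ τ + n * ℓ s} := by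
  intro n
  ext w
  rw [Set.mem_add]
  constructor
  · intro hw
    simp only [Set.mem_ofPred_eq] at hw
    refine ⟨w - s, ?_, s, hs, by abel⟩
    simp only [Set.mem_ofPred_eq, map_sub]
    linarith
  · rintro ⟨u, hu, a, ha, rfl⟩
    simp only [Set.mem_ofPred_eq, map_add] at hu ⊢
    have := hmax a ha
    linarith

lemma IsOrbit.union {A : Finset V} {x y : ℤ → Set V} (hx : IsOrbit A x) (hy : IsOrbit A y) :
    IsOrbit A fun n => x n ∪ y n := by
  intro n
  simp only [hx n, hy n, Set.union_add]

lemma IsOrbit.biUnion {ι : Type*} {A : Finset V} {x : ι → ℤ → Set V} (I : Set ι)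
    (hx : ∀ i ∈ I, IsOrbit A (x i)) : IsOrbit A fun n => ⋃ i ∈ I, x i n := by
  intro n
  simp only [Set.iUnion_add]
  exact Set.iUnion₂_congr fun i hi => hx i hi n

/-- A finite union of cone orbits at extreme points misses some point of any half-space orbit whose
functional attains its maximum on `A` at two distinct points `s`, `s'`: if all the points
`c - m • (s + s')` (at time `-2m`) were covered, two of them, at times `-2m > -2m'`, would lie in the
same cone orbit with comparable coefficients (Dickson's lemma), and their difference would give a
line in a tangent monoid at an extreme point. -/
lemma exists_not_mem_coneOrbits {A : Finset V} {s s' : V} (hs : s ∈ A) (hs' : s' ∈ A)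
    (hne : s ≠ s') {I : Set V} (hI : I.Finite) (e : V → V) (he : ∀ v ∈ I, ExtremeIn A (e v))
    (c : V) :
    ∃ m : ℕ, c - m • (s + s') ∉ ⋃ v ∈ I, coneOrbit A v (e v) (-(2 * m)) := by
  by_contra! hcon
  simp only [Set.mem_iUnion] at hcon
  choose v hvI hv using hcon
  choose r hr hr' using hv
  choose f hf using hr
  -- Dickson's lemma, then pigeonhole along the monotone subsequence
  obtain ⟨g, hg⟩ := (wellQuasiOrdered_le (α := A → ℕ)).exists_monotone_subseq
    (fun m a => f m a)
  have : Finite I := hI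
  obtain ⟨i, j, hij, hveq⟩ := Finite.exists_ne_map_eq_of_infinite
    (fun i : ℕ => (⟨v (g i), hvI (g i)⟩ : I))
  wlog hlt : i < j generalizing i j
  · exact this j i hij.symm hveq.symm (by omega)
  have hveq' : v (g i) = v (g j) := congrArg Subtype.val hveq
  have hle : ∀ a ∈ A, f (g i) a ≤ f (g j) a := fun a ha => hg i j hlt.le ⟨a, ha⟩
  have hgl : g i < g j := g.strictMono hlt
  obtain ⟨k, hk⟩ := Nat.exists_eq_add_of_lt hgl
  have h1 := hr' (g i)
  have h2 := hr' (g j)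
  rw [hf] at h1 h2
  rw [← hveq'] at h2
  have hsplit : ∑ a ∈ A, f (g j) a • (a - e (v (g i))) =
      ∑ a ∈ A, (f (g j) a - f (g i) a) • (a - e (v (g i)))
        + ∑ a ∈ A, f (g i) a • (a - e (v (g i))) := by
    rw [← Finset.sum_add_distrib]
    refine Finset.sum_congr rfl fun a ha => ?_
    rw [← add_smul, Nat.sub_add_cancel (hle a ha)]
  rw [hsplit] at h2
  have h3 := (he _ (hvI (g i))).eq_of_add hs hs' (k := k + 1) (by omega)
    (h := fun a => f (g j) a - f (g i) a) (by
      have h4 := eq_sub_of_add_eq' h1.symm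
      rw [h4] at h2
      have h5 : (-(2 * ((g j : ℕ) : ℤ))) = -(2 * (g i : ℤ)) - 2 * ((k + 1 : ℕ) : ℤ) := by
        rw [hk]; push_cast; ring
      have h6 : g j • (s + s') = g i • (s + s') + (k + 1) • (s + s') := by
        rw [← add_smul, hk, add_assoc]
      rw [h5, h6, sub_smul (-(2 * (g i : ℤ))), mul_smul (2 : ℤ) ((k + 1 : ℕ) : ℤ),
        natCast_zsmul, two_zsmul] at h2
      rw [← sub_eq_zero] at h2
      rw [← neg_eq_zero, ← h2]
      simp only [smul_add, smul_sub]
      abel)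
  exact hne (h3.1.trans h3.2.symm)

/-- The perturbation at time `0`: no orbit is determined by its restriction to a finite set. -/
lemma exists_perturbation {L : Type*} [AddCommGroup L] [LinearOrder L] [IsOrderedAddMonoid L]
    (φ : V →+ L) (hφ : Function.Injective φ) {A : Finset V} (ℓ : V →+ ℤ) {s s' : V} (hs : s ∈ A)
    (hs' : s' ∈ A) (hne : s ≠ s') (hss : ℓ s' = ℓ s) (hmax : ∀ a ∈ A, ℓ a ≤ ℓ s)
    {u : V} (hu : ℓ u < 0) {x : ℤ → Set V} (hx : IsOrbit A x) {F : Set V} (hF : F.Finite) :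
    ∃ y, IsOrbit A y ∧ y ≠ x ∧ ∀ v ∈ F, v ∈ y 0 ↔ v ∈ x 0 := by
  by_contra! hcon
  have huniq : ∀ y, IsOrbit A y → (∀ v ∈ F, v ∈ y 0 ↔ v ∈ x 0) → y = x := by
    intro y hy h
    by_contra hyx
    obtain ⟨v, hv, h'⟩ := hcon y hy hyx
    have := h v hv
    tauto
  have hex : ∀ v ∈ F ∩ x 0, ∃ e ∈ A, ExtremeIn A e ∧ ∀ n, coneOrbit A v e n ⊆ x n := by
    rintro v ⟨-, hv⟩
    obtain ⟨t, ht, hsub⟩ := hx.exists_coneOrbit_subset hv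
    obtain ⟨e, he, hext, hte⟩ := exists_extreme φ hφ ht
    exact ⟨e, he, hext, fun n => (coneOrbit_subset he hte v n).trans (hsub n)⟩
  choose! e heA hext hsub using hex
  -- `x` is a finite union of cone orbits at extreme points
  have hxy : (fun n => ⋃ v ∈ F ∩ x 0, coneOrbit A v (e v) n) = x := by
    refine huniq _ (IsOrbit.biUnion _ fun v hv => isOrbit_coneOrbit v (heA v hv)) ?_
    intro v hv
    constructor
    · intro h
      simp only [Set.mem_iUnion] at h
      obtain ⟨w, hw, h⟩ := h
      exact hsub w hw 0 h
    · intro h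
      simp only [Set.mem_iUnion]
      exact ⟨v, ⟨hv, h⟩, 0, zero_mem _, by simp⟩
  -- `x` contains every half-space orbit that avoids `F` at time `0`
  obtain ⟨τ, hτ⟩ : ∃ τ : ℤ, ∀ v ∈ F, τ < ℓ v := by
    obtain ⟨b, hb⟩ := (hF.image ℓ).bddBelow
    exact ⟨b - 1, fun v hv => by have := hb (Set.mem_image_of_mem ℓ hv); omega⟩
  have hxH : (fun n => x n ∪ {w | ℓ w ≤ τ + n * ℓ s}) = x := by
    refine huniq _ (hx.union (isOrbit_halfSpace ℓ hs hmax τ)) ?_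
    intro v hv
    have := hτ v hv
    simp only [Set.mem_union, Set.mem_ofPred_eq, zero_mul, add_zero]
    constructor
    · rintro (h | h)
      · exact h
      · omega
    · exact Or.inl
  obtain ⟨m, hm⟩ := exists_not_mem_coneOrbits hs hs' hne (hF.subset Set.inter_subset_left) e hext
    (τ.natAbs • u)
  have hmx : τ.natAbs • u - m • (s + s') ∈ x (-(2 * m)) := by
    rw [← hxH]
    right
    simp only [Set.mem_ofPred_eq, map_sub, map_nsmul, map_add, hss, nsmul_eq_mul]
    have : (τ.natAbs : ℤ) * ℓ u ≤ -τ.natAbs := by nlinarith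
    have : -(τ.natAbs : ℤ) ≤ τ := by omega
    linarith
  rw [← hxy] at hmx
  exact hm hmx

end Perturbation

/-- In rank at least two some non-zero functional attains its maximum on `A` at two distinct points:
an edge of the planar projection of `A`, found by maximizing a slope. -/
lemma exists_supporting_edge {d : ℕ} (hd : 2 ≤ d) {A : Finset (Fin d → ℤ)} {a₀ a₁ : Fin d → ℤ}
    (ha₀ : a₀ ∈ A) (ha₁ : a₁ ∈ A) (h01 : a₀ ≠ a₁) :
    ∃ (ℓ : (Fin d → ℤ) →+ ℤ) (s s' u : Fin d → ℤ), s ∈ A ∧ s' ∈ A ∧ s ≠ s' ∧ ℓ s' = ℓ s ∧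
      (∀ a ∈ A, ℓ a ≤ ℓ s) ∧ ℓ u < 0 := by
  let i : Fin d := ⟨0, by omega⟩
  let j : Fin d := ⟨1, by omega⟩
  have hij : i ≠ j := by simp [i, j]
  obtain ⟨s, hs, hmax⟩ := Finset.exists_max_image A (fun a => a i) ⟨a₀, ha₀⟩
  by_cases hun : ∃ s' ∈ A, s ≠ s' ∧ s' i = s i
  · obtain ⟨s', hs', hne, heq⟩ := hun
    exact ⟨Pi.evalAddMonoidHom _ i, s, s', Pi.single i (-1), hs, hs', hne, heq, hmax, by simp⟩
  push Not at hun
  have hlt : ∀ a ∈ A, a ≠ s → a i < s i := fun a ha hne =>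
    lt_of_le_of_ne (hmax a ha) (hun a ha hne.symm)
  have hnon : (A.erase s).Nonempty := by
    by_cases h : a₀ = s
    · exact ⟨a₁, Finset.mem_erase.2 ⟨fun h' => h01 (h.trans h'.symm), ha₁⟩⟩
    · exact ⟨a₀, Finset.mem_erase.2 ⟨h, ha₀⟩⟩
  obtain ⟨s', hs', hslope⟩ := Finset.exists_max_image (A.erase s)
    (fun a => ((a j - s j : ℤ) : ℚ) / ((s i - a i : ℤ) : ℚ)) hnon
  rw [Finset.mem_erase] at hs'
  have hq := hlt s' hs'.2 hs'.1
  refine ⟨(s i - s' i) • Pi.evalAddMonoidHom (fun _ => ℤ) j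
      + (s' j - s j) • Pi.evalAddMonoidHom (fun _ => ℤ) i,
    s, s', Pi.single j (-1), hs, hs'.2, hs'.1.symm, ?_, ?_, ?_⟩
  · simp; ring
  · intro a ha
    by_cases has : a = s
    · rw [has]
    have h1 := hslope a (Finset.mem_erase.2 ⟨has, ha⟩)
    have h2 := hlt a ha has
    rw [div_le_div_iff₀ (by exact_mod_cast sub_pos.2 h2) (by exact_mod_cast sub_pos.2 hq)] at h1
    have h3 : (a j - s j) * (s i - s' i) ≤ (s' j - s j) * (s i - a i) := by exact_mod_cast h1
    simp
    linarith
  · simp [hij]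
    linarith

/-! ### From the product topology to finite windows -/

/-- Agreement of two orbits on a finite set at a later time follows from agreement on a larger finite
set at an earlier time. -/
lemma exists_window_back {V : Type*} [AddCommGroup V] (A : Finset V) (k : ℕ) (F : Set V)
    (hF : F.Finite) : ∃ F' : Set V, F'.Finite ∧ ∀ x y : ℤ → Set V, IsOrbit A x → IsOrbit A y →
      ∀ n : ℤ, (∀ v ∈ F', v ∈ y n ↔ v ∈ x n) → ∀ v ∈ F, v ∈ y (n + k) ↔ v ∈ x (n + k) := by
  induction k generalizing F with
  | zero => exact ⟨F, hF, by simp⟩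
  | succ k ih =>
    obtain ⟨F', hF', h⟩ := ih (F - (A : Set V)) (hF.sub A.finite_toSet)
    refine ⟨F', hF', fun x y hx hy n hn v hv => ?_⟩
    have h1 := h x y hx hy n hn
    have key : ∀ z : ℤ → Set V, IsOrbit A z →
        (v ∈ z (n + (k + 1 : ℕ)) ↔ ∃ a ∈ A, v - a ∈ z (n + k)) := by
      intro z hz
      rw [Nat.cast_succ, ← add_assoc, hz, Set.mem_add]
      constructor
      · rintro ⟨u, hu, a, ha, rfl⟩
        exact ⟨a, ha, by simpa using hu⟩
      · rintro ⟨a, ha, h⟩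
        exact ⟨v - a, h, a, ha, by abel⟩
    rw [key x hx, key y hy]
    exact exists_congr fun a => and_congr_right fun ha => h1 _ (Set.sub_mem_sub hv ha)

lemma exists_finite_of_mem_nhds_cylTop {V : Type*} {S : Set V} {t : Set (Set V)}
    (ht : t ∈ @nhds _ (cylTop V) S) :
    ∃ F : Set V, F.Finite ∧ ∀ T : Set V, (∀ v ∈ F, v ∈ T ↔ v ∈ S) → T ∈ t := by
  unfold cylTop at ht
  rw [nhds_induced, Filter.mem_comap] at ht
  obtain ⟨r, hr, hrt⟩ := ht
  rw [nhds_pi, Filter.mem_pi] at hr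
  obtain ⟨F, hF, q, hq, hqr⟩ := hr
  refine ⟨F, hF, fun T hT => hrt (hqr fun v hv => ?_)⟩
  have := mem_of_mem_nhds (hq v)
  have hdec : @decide (v ∈ T) (Classical.propDecidable _) =
      @decide (v ∈ S) (Classical.propDecidable _) :=
    decide_eq_decide.2 (hT v hv)
  change @decide (v ∈ T) (Classical.propDecidable _) ∈ q v
  rw [hdec]
  exact this

lemma exists_window_of_mem_nhds {d : ℕ} {A : Set (Fin d → ℤ)} {x : NatExt A} {U : Set (NatExt A)}
    (hU : U ∈ @nhds _ (natExtTop A) x) :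
    ∃ (I : Set ℤ) (F : ℤ → Set (Fin d → ℤ)), I.Finite ∧ (∀ i, (F i).Finite) ∧
      ∀ y : NatExt A, (∀ i ∈ I, ∀ v ∈ F i, v ∈ y.1 i ↔ v ∈ x.1 i) → y ∈ U := by
  let : TopologicalSpace (Set (Fin d → ℤ)) := cylTop (Fin d → ℤ)
  unfold natExtTop at hU
  rw [nhds_induced, Filter.mem_comap] at hU
  obtain ⟨r, hr, hrU⟩ := hU
  rw [nhds_pi, Filter.mem_pi] at hr
  obtain ⟨I, hI, t, ht, htr⟩ := hr
  choose F hF hFt using fun i => exists_finite_of_mem_nhds_cylTop (ht i)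
  exact ⟨I, F, hI, hF, fun y hy => hrU (htr fun i hi => hFt i _ (hy i hi))⟩

/-- For `d ≥ 2` and a finite positively generating set `A ⊆ ℤ^d` containing
`0`, the natural extension of `φ_A` is perfect: it has no isolated points. -/
theorem natExt_perfect {d : ℕ} (hd : 2 ≤ d)
    (A : Set (Fin d → ℤ)) (hfin : A.Finite) (h0 : (0 : Fin d → ℤ) ∈ A)
    (hgen : PosGenZ A) :
    ∀ x : NatExt A,
      (@nhdsWithin (NatExt A) (natExtTop A) x {x}ᶜ).NeBot := by
  intro x
  obtain ⟨A, rfl⟩ := hfin.exists_finset_coe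
  -- `A ≠ {0}`, since the sums `n • {0}` do not exhaust `ℤ^d`
  obtain ⟨a₁, ha₁, h01⟩ : ∃ a ∈ A, (0 : Fin d → ℤ) ≠ a := by
    by_contra! hcon
    have hA : (A : Set (Fin d → ℤ)) = {0} :=
      Set.eq_singleton_iff_unique_mem.2 ⟨h0, fun a ha => (hcon a ha).symm⟩
    obtain ⟨n, -, hn⟩ := hgen fun _ => 1
    rw [hA, Set.nsmul_singleton, smul_zero, Set.mem_singleton_iff] at hn
    have := congrFun hn ⟨0, by omega⟩
    simp at this
  obtain ⟨ℓ, s, s', u, hs, hs', hne, hss, hmax, hu⟩ := exists_supporting_edge hd h0 ha₁ h01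
  let :=  natExtTop (A : Set (Fin d → ℤ))
  change (nhdsWithin x {x}ᶜ).NeBot
  rw [← mem_closure_iff_nhdsWithin_neBot, mem_closure_iff_nhds]
  intro U hU
  obtain ⟨I, F, hI, hF, hFU⟩ := exists_window_of_mem_nhds hU
  have hx : IsOrbit A x.1 := x.2
  -- the window is controlled by a finite set at a single early time `b`
  obtain ⟨b, hb⟩ := hI.bddBelow
  choose G hG hGF using fun i : ℤ => exists_window_back A (i - b).toNat (F i) (hF i)
  have hxb : IsOrbit A fun n => x.1 (n + b) := fun n => by
    have := hx (n + b)
    rwa [add_right_comm] at this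
  obtain ⟨y, hy, hyx, hagree⟩ := exists_perturbation (toLexAddEquiv (Fin d → ℤ)).toAddMonoidHom
    (toLexAddEquiv (Fin d → ℤ)).injective ℓ hs hs' hne hss hmax hu
    (x := fun n => x.1 (n + b)) hxb
    (hI.biUnion fun i _ => hG i)
  have hz : IsOrbit A fun n => y (n - b) := fun n => by
    have := hy (n - b)
    rwa [sub_add_eq_add_sub] at this
  refine ⟨⟨fun n => y (n - b), hz⟩, hFU _ ?_, ?_⟩
  · intro i hi
    have hib : b + ((i - b).toNat : ℤ) = i := by
      rw [Int.toNat_of_nonneg (sub_nonneg.2 (hb hi))]; ring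
    have := hGF i x.1 (fun n => y (n - b)) hx hz b (fun v hv => by
      simpa using hagree v (Set.mem_biUnion hi hv))
    rwa [hib] at this
  · intro h
    apply hyx
    have h' : (fun n => y (n - b)) = x.1 := congrArg Subtype.val h
    funext n
    rw [← h']
    simp
end
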